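/- There exists ε₀ ∈ (0, π/6) such that for every ε ∈ (0, ε₀), every r₀ ∈ (1, √2), every pair of potentials v₂, v₃ satisfying assumptions (i₂)–(iii₂) and (i₃)–(iv₃), every integer n ≥ 1, and every configuration C_n of n distinct points in ℝ²: if F(C_n) = −2n + ⌈2√n⌉, then there exists a rigid motion (isometry) R of ℝ² such that R(C_n) ⊆ ℤ². -/

import Mathlib

open scoped Real

noncomputable section

abbrev Pt : Type := EuclideanSpace ℝ (Fin 2)

/-- The clockwise angle in `[0, 2π)` between the vectors `u` and `v`. -/
noncomputable def cwAngle (u v : Pt) : ℝ :=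
  let a := Complex.arg ((⟨u 0, u 1⟩ : ℂ) * (starRingEnd ℂ) (⟨v 0, v 1⟩ : ℂ))
  if a < 0 then a + 2 * π else a

/-- Assumptions (i₂)–(iii₂) on the two-body potential. -/
structure V2Hyp (ε r0 : ℝ) (v2 : ℝ → EReal) : Prop where
  eq_neg_one : v2 1 = -1
  ge_neg_one : ∀ r : ℝ, 0 ≤ r → -1 ≤ v2 r
  gt_neg_one : ∀ r : ℝ, 0 ≤ r → r ≠ 1 → -1 < v2 r
  eq_zero : ∀ r : ℝ, r0 ≤ r → v2 r = 0
  repulsive : ∀ r : ℝ, 0 ≤ r → r ≤ 1 - ε → ((ε⁻¹ : ℝ) : EReal) < v2 r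

/-- Assumptions (i₃)–(iv₃) on the three-body potential. -/
structure V3Hyp (ε : ℝ) (v3 : ℝ → ℝ) : Prop where
  symm : ∀ θ : ℝ, 0 ≤ θ → θ ≤ 2 * π → v3 θ = v3 (2 * π - θ)
  zero_pi_half : v3 (π / 2) = 0
  zero_pi : v3 π = 0
  zero_three_pi_half : v3 (3 * π / 2) = 0
  pos : ∀ θ : ℝ, 0 ≤ θ → θ ≤ 2 * π → θ ∉ ({π / 2, π, 3 * π / 2} : Set ℝ) → 0 < v3 θ
  slope : ∀ θ ∈ Set.Icc (π - ε) (π + ε), 4 * (π / 6 - ε)⁻¹ * |θ - π| ≤ v3 θ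
  slope_eq : ∀ θ ∈ Set.Icc (π - ε) (π + ε), v3 θ = 4 * (π / 6 - ε)⁻¹ * |θ - π| → θ = π
  large : ∀ θ : ℝ, 0 ≤ θ → θ ≤ 2 * π →
    θ ∉ Set.Icc (π / 2 - ε) (π / 2 + ε) ∪ Set.Icc (π - ε) (π + ε) ∪
        Set.Icc (3 * π / 2 - ε) (3 * π / 2 + ε) →
    4 / (1 - ε) ^ 2 * (Real.sqrt 2 + 1 / 2) ^ 2 < v3 θ

/-- The configurational energy `F(C_n)`. -/
noncomputable def energy (r0 : ℝ) (v2 : ℝ → EReal) (v3 : ℝ → ℝ) {n : ℕ}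
    (x : Fin n → Pt) : EReal :=
  ((1 / 2 : ℝ) : EReal) *
      ∑ i : Fin n, ∑ j : Fin n, (if j ≠ i then v2 (dist (x i) (x j)) else 0)
    + (((1 / 2 : ℝ) * ∑ i : Fin n, ∑ j : Fin n, ∑ k : Fin n,
        (if i ≠ j ∧ i ≠ k ∧ j ≠ k ∧ dist (x i) (x j) ≤ r0 ∧ dist (x i) (x k) ≤ r0
          then v3 (cwAngle (x j - x i) (x k - x i)) else 0) : ℝ) : EReal)

/-- `x` is an `n`-point configuration of minimal energy. -/
def IsMinimizer (r0 : ℝ) (v2 : ℝ → EReal) (v3 : ℝ → ℝ) {n : ℕ} (x : Fin n → Pt) : Prop :=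
  Function.Injective x ∧
    ∀ y : Fin n → Pt, Function.Injective y → energy r0 v2 v3 x ≤ energy r0 v2 v3 y


/-- The square lattice `ℤ² ⊆ ℝ²`. -/
def latticeZ2 : Set Pt := {p | ∃ a b : ℤ, p 0 = (a : ℝ) ∧ p 1 = (b : ℝ)}

/-!
Call two points bonded if their distance is at most `r0`. Every bond contributes at least `-1`, so
the point is that the cost of the bond angles is at least the excess of the number of bonds over
`2 n - ⌈2 √n⌉`. Deleting one bond from each pair with a forbidden angle, we may assume that all
angles are almost right or almost straight. Divide the lines through the origin into five sectors of
width `π / 5` and label each bond with the sector of its direction. If the division is rotated at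
random, the two bonds of an almost straight angle get different labels with probability proportional
to the bend, which pays for the additional labels at their common point: up to the cost of the
angles, two labels per point are enough. Bonds of equal label line up in chains which never bend
back, and there are at most as many bonds as labels carried by the points, minus the number of
chains. Two chains whose sectors are almost perpendicular meet at most once, and every point lies on
two such chains. Almost perpendicular sectors form a pentagon, which has no triangles, so `k` chains
meet in at most `k ^ 2 / 4` points by Mantel's theorem. Hence there are at least `2 √n` chains.

If the bound is attained, all bonds have length `1` and all angles are multiples of `π / 2`. The
bond graph is then connected, because the bound on the number of bonds is strictly superadditive,
and a connected framework of unit bonds at right angles has Gaussian integer coordinates.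
-/

lemma intervalIntegrable_floor_add (a c d : ℝ) :
    IntervalIntegrable (fun t : ℝ => (⌊a + t⌋ : ℝ)) MeasureTheory.volume c d :=
  Monotone.intervalIntegrable fun _ _ h =>
    Int.cast_le.mpr <| Int.floor_le_floor <| add_le_add_right h a

lemma integral_fract_add (a : ℝ) :
    ∫ t in (0 : ℝ)..1, Int.fract (a + t) = ∫ t in (0 : ℝ)..1, Int.fract t := by
  have hper : Function.Periodic (Int.fract : ℝ → ℝ) 1 := Int.fract_add_one
  rw [intervalIntegral.integral_comp_add_left, add_zero, hper.intervalIntegral_add_eq a 0, zero_add]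

lemma integral_floor_add_sub_floor_add (a b : ℝ) :
    ∫ t in (0 : ℝ)..1, ((⌊a + t⌋ : ℝ) - ⌊b + t⌋) = a - b := by
  have hint (c : ℝ) : IntervalIntegrable (fun t => Int.fract (c + t)) MeasureTheory.volume 0 1 :=
    (by fun_prop : Continuous fun t : ℝ => c + t).intervalIntegrable 0 1 |>.sub
      (intervalIntegrable_floor_add c 0 1)
  calc ∫ t in (0 : ℝ)..1, ((⌊a + t⌋ : ℝ) - ⌊b + t⌋)
      = ∫ t in (0 : ℝ)..1, ((a - b) - (Int.fract (a + t) - Int.fract (b + t))) := by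
        refine intervalIntegral.integral_congr fun t _ => ?_
        simp only [Int.fract]
        ring
    _ = a - b := by
        rw [intervalIntegral.integral_sub (by simp) ((hint a).sub (hint b)),
          intervalIntegral.integral_sub (hint a) (hint b), integral_fract_add, integral_fract_add]
        simp

lemma integral_abs_floor_add_sub_floor_add (a b : ℝ) :
    ∫ t in (0 : ℝ)..1, |(⌊a + t⌋ : ℝ) - ⌊b + t⌋| = |a - b| := by
  wlog h : b ≤ a generalizing a b
  · simpa only [abs_sub_comm] using this b a (le_of_not_ge h)
  have hnonneg (t : ℝ) : 0 ≤ (⌊a + t⌋ : ℝ) - ⌊b + t⌋ :=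
    sub_nonneg.mpr <| Int.cast_le.mpr <| Int.floor_le_floor <| by linarith
  simp only [abs_of_nonneg (hnonneg _), abs_of_nonneg (sub_nonneg.mpr h),
    integral_floor_add_sub_floor_add]

lemma exists_shift_sum_abs_floor_sub_le {κ : Type*} (s : Finset κ) (a b : κ → ℝ) :
    ∃ t : ℝ, ∑ k ∈ s, |(⌊a k + t⌋ : ℝ) - ⌊b k + t⌋| ≤ ∑ k ∈ s, |a k - b k| := by
  have hint (k : κ) : IntervalIntegrable (fun t : ℝ => |(⌊a k + t⌋ : ℝ) - ⌊b k + t⌋|)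
      MeasureTheory.volume 0 1 :=
    ((intervalIntegrable_floor_add _ 0 1).sub (intervalIntegrable_floor_add _ 0 1)).abs
  have hmean : ∫ t in Set.Ioc (0 : ℝ) 1, ∑ k ∈ s, |(⌊a k + t⌋ : ℝ) - ⌊b k + t⌋| =
      ∑ k ∈ s, |a k - b k| := by
    rw [← intervalIntegral.integral_of_le zero_le_one,
      intervalIntegral.integral_finsetSum fun k _ => hint k]
    exact Finset.sum_congr rfl fun k _ => integral_abs_floor_add_sub_floor_add _ _
  have : MeasureTheory.IsProbabilityMeasure
      (MeasureTheory.volume.restrict (Set.Ioc (0 : ℝ) 1)) := ⟨by simp⟩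
  obtain ⟨t, ht⟩ := MeasureTheory.exists_le_integral
    (MeasureTheory.integrable_finsetSum s fun k _ => (hint k).1)
  exact ⟨t, ht.trans_eq hmean⟩

/-- Here `a k` and `b k` stand for points of the circle `ℝ / nℤ` at distance at most `d k`, and the
residue of a floor for the sector of that circle containing the shifted point. -/
lemma exists_shift_card_floor_ne_le {κ : Type*} {n : ℕ} (s : Finset κ) (a b d : κ → ℝ)
    (h : ∀ k ∈ s, ∃ m : ℤ, |a k - b k - n * m| ≤ d k) :
    ∃ t : ℝ, ((s.filter fun k => ((⌊a k + t⌋ : ℤ) : ZMod n) ≠ (⌊b k + t⌋ : ℤ)).card : ℝ) ≤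
      ∑ k ∈ s, d k := by
  choose! m hm using h
  obtain ⟨t, ht⟩ := exists_shift_sum_abs_floor_sub_le s (fun k => a k - n * m k) b
  refine ⟨t, ?_⟩
  calc ((s.filter fun k => ((⌊a k + t⌋ : ℤ) : ZMod n) ≠ (⌊b k + t⌋ : ℤ)).card : ℝ)
      = ∑ k ∈ s, if ((⌊a k + t⌋ : ℤ) : ZMod n) ≠ (⌊b k + t⌋ : ℤ) then (1 : ℝ) else 0 :=
        (Finset.sum_boole _ _).symm
    _ ≤ ∑ k ∈ s, |(⌊a k - n * m k + t⌋ : ℝ) - ⌊b k + t⌋| := by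
        refine Finset.sum_le_sum fun k _ => ?_
        split_ifs with hk
        · have hfloor : ⌊a k - n * m k + t⌋ = ⌊a k + t⌋ - n * m k := by
            rw [← Int.floor_sub_intCast]
            push_cast
            ring_nf
          rw [hfloor, ← Int.cast_sub, ← Int.cast_abs, ← Int.cast_one, Int.cast_le]
          refine Int.one_le_abs fun h0 => hk ?_
          simpa using congrArg (Int.cast : ℤ → ZMod n) (sub_eq_zero.mp h0)
        · exact abs_nonneg _
    _ ≤ ∑ k ∈ s, d k := by
        refine ht.trans (Finset.sum_le_sum fun k hk => ?_)
        simpa only [sub_right_comm] using hm k hk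

lemma two_mul_card_image_le {ι Λ : Type*} [DecidableEq Λ] (A : Finset ι) (s : ι → Λ) :
    2 * (A.image s).card ≤ 2 + (A.offDiag.filter fun p => s p.1 ≠ s p.2).card := by
  have hsub : (A.image s).offDiag ⊆
      (A.offDiag.filter fun p => s p.1 ≠ s p.2).image (Prod.map s s) := by
    rintro ⟨x, y⟩ hxy
    obtain ⟨hx, hy, hne⟩ := Finset.mem_offDiag.mp hxy
    obtain ⟨a, ha, rfl⟩ := Finset.mem_image.mp hx
    obtain ⟨b, hb, rfl⟩ := Finset.mem_image.mp hy
    refine Finset.mem_image.mpr ⟨(a, b), ?_, rfl⟩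
    exact Finset.mem_filter.mpr ⟨Finset.mem_offDiag.mpr ⟨ha, hb, ne_of_apply_ne s hne⟩, hne⟩
  have hcard := (Finset.card_le_card hsub).trans Finset.card_image_le
  rw [Finset.offDiag_card] at hcard
  have hsq : 3 * (A.image s).card ≤ 2 + (A.image s).card * (A.image s).card := by
    rcases (A.image s).card with _ | _ | m <;> grind
  omega

/-- Triangle-freeness of the crossing graph makes any two bonds crossing `j` opposite. -/
lemma exists_opposite_classes {ι Λ : Type*} [DecidableEq ι]
    {X : SimpleGraph Λ} (hX : X.CliqueFree 3) {N : Finset ι} {s : ι → Λ} {opp : ι → ι → Prop}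
    (hsymm : ∀ a b, opp a b → opp b a)
    (huniq : ∀ a ∈ N, ∀ b ∈ N, ∀ c ∈ N, opp a b → opp a c → b = c)
    (hgood : ∀ a ∈ N, ∀ b ∈ N, a ≠ b → opp a b ∨ X.Adj (s a) (s b)) {j : ι} (hj : j ∈ N) :
    ∃ A B : Finset ι, j ∈ A ∧ A ∪ B = N ∧ Disjoint A B ∧ (A : Set ι).Pairwise opp ∧
      (B : Set ι).Pairwise opp ∧ ∀ b ∈ B, X.Adj (s j) (s b) := by
  classical
  have hcross : ∀ b ∈ N.filter fun a => ¬ (a = j ∨ opp j a), X.Adj (s j) (s b) := by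
    simp only [Finset.mem_filter, not_or]
    exact fun b ⟨hb, hne, hopp⟩ => (hgood j hj b hb (Ne.symm hne)).resolve_left hopp
  refine ⟨N.filter fun a => a = j ∨ opp j a, N.filter fun a => ¬ (a = j ∨ opp j a),
    by simp [hj], Finset.filter_union_filter_not_eq _ _, Finset.disjoint_filter_filter_not _ _ _,
    ?_, ?_, hcross⟩
  · simp only [Set.Pairwise, Finset.coe_filter, Set.mem_ofPred_eq]
    rintro a ⟨ha, rfl | ha'⟩ b ⟨hb, rfl | hb'⟩ hab
    · exact absurd rfl hab
    · exact hb'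
    · exact hsymm _ _ ha'
    · exact absurd (huniq j hj a ha b hb ha' hb') hab
  · intro a ha b hb hab
    refine (hgood a (Finset.mem_filter.mp ha).1 b (Finset.mem_filter.mp hb).1 hab).resolve_right
      fun h => ?_
    exact hX {s j, s a, s b} (SimpleGraph.is3Clique_triple_iff.mpr ⟨hcross a ha, hcross b hb, h⟩)

lemma card_filter_offDiag_add_le {ι Λ : Type*} [DecidableEq ι] [DecidableEq Λ] {A B : Finset ι}
    (hAB : Disjoint A B) (s : ι → Λ) {opp : ι → ι → Prop} [DecidableRel opp]
    (hA : (A : Set ι).Pairwise opp) (hB : (B : Set ι).Pairwise opp) :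
    (A.offDiag.filter fun p => s p.1 ≠ s p.2).card +
      (B.offDiag.filter fun p => s p.1 ≠ s p.2).card ≤
      ((A ∪ B).offDiag.filter fun p => opp p.1 p.2 ∧ s p.1 ≠ s p.2).card := by
  rw [← Finset.card_union_of_disjoint]
  · refine Finset.card_le_card fun p hp => ?_
    simp only [Finset.mem_union, Finset.mem_filter, Finset.mem_offDiag] at hp ⊢
    rcases hp with ⟨⟨h1, h2, h⟩, hs⟩ | ⟨⟨h1, h2, h⟩, hs⟩
    · exact ⟨⟨Or.inl h1, Or.inl h2, h⟩, hA h1 h2 h, hs⟩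
    · exact ⟨⟨Or.inr h1, Or.inr h2, h⟩, hB h1 h2 h, hs⟩
  · refine Finset.disjoint_left.mpr fun p hp hp' => ?_
    simp only [Finset.mem_filter, Finset.mem_offDiag] at hp hp'
    exact Finset.disjoint_left.mp hAB hp.1.1 hp'.1.1

lemma exists_label_set {ι Λ : Type*} [DecidableEq Λ] [Nonempty Λ]
    {X : SimpleGraph Λ} (hX : X.CliqueFree 3) (hdeg : ∀ a, ∃ b, X.Adj a b)
    {N : Finset ι} {s : ι → Λ} {opp : ι → ι → Prop} [DecidableRel opp]
    (hsymm : ∀ a b, opp a b → opp b a)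
    (huniq : ∀ a ∈ N, ∀ b ∈ N, ∀ c ∈ N, opp a b → opp a c → b = c)
    (hgood : ∀ a ∈ N, ∀ b ∈ N, a ≠ b → opp a b ∨ X.Adj (s a) (s b)) :
    ∃ S : Finset Λ, (∀ a ∈ N, s a ∈ S) ∧ (∃ a ∈ S, ∃ b ∈ S, X.Adj a b) ∧
      2 * S.card ≤ 4 + (N.offDiag.filter fun p => opp p.1 p.2 ∧ s p.1 ≠ s p.2).card := by
  classical
  rcases N.eq_empty_or_nonempty with rfl | ⟨j, hj⟩
  · obtain ⟨a⟩ := ‹Nonempty Λ›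
    obtain ⟨b, hab⟩ := hdeg a
    refine ⟨{a, b}, by simp, ⟨a, by simp, b, by simp, hab⟩, ?_⟩
    rw [Finset.card_pair hab.ne]
    omega
  obtain ⟨A, B, hjA, rfl, hdisj, hA, hB, hcross⟩ := exists_opposite_classes hX hsymm huniq hgood hj
  obtain ⟨C, hBC, ⟨c, hc, hjc⟩, hCcard⟩ : ∃ C : Finset Λ, B.image s ⊆ C ∧
      (∃ c ∈ C, X.Adj (s j) c) ∧
      2 * C.card ≤ 2 + (B.offDiag.filter fun p => s p.1 ≠ s p.2).card := by
    rcases B.eq_empty_or_nonempty with rfl | ⟨k, hk⟩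
    · obtain ⟨c, hjc⟩ := hdeg (s j)
      exact ⟨{c}, by simp, ⟨c, by simp, hjc⟩, by simp⟩
    · exact ⟨B.image s, subset_rfl, ⟨s k, Finset.mem_image_of_mem s hk, hcross k hk⟩,
        two_mul_card_image_le B s⟩
  refine ⟨A.image s ∪ C, fun a ha => ?_, ⟨s j, ?_, c, Finset.mem_union_right _ hc, hjc⟩, ?_⟩
  · rcases Finset.mem_union.mp ha with h | h
    · exact Finset.mem_union_left _ (Finset.mem_image_of_mem s h)
    · exact Finset.mem_union_right _ (hBC (Finset.mem_image_of_mem s h))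
  · exact Finset.mem_union_left _ (Finset.mem_image_of_mem s hjA)
  · have hAcard := two_mul_card_image_le A s
    have hunion := Finset.card_union_le (A.image s) C
    have hcuts := card_filter_offDiag_add_le hdisj s hA hB
    omega

lemma four_mul_card_edgeFinset_le_of_cliqueFree_three {V : Type*} [Fintype V] (G : SimpleGraph V)
    [DecidableRel G.Adj] (h : G.CliqueFree 3) : 4 * G.edgeFinset.card ≤ Fintype.card V ^ 2 := by
  have hTuran := SimpleGraph.CliqueFree.card_edgeFinset_le (r := 2) h
  simp only [Nat.choose_eq_zero_of_lt (Nat.mod_lt _ two_pos)] at hTuran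
  omega

section Chains

open Relation

lemma reflTransGen_total_of_leftUnique {α : Type*} {r : α → α → Prop} (hr : Relator.LeftUnique r)
    {a b c : α} (hac : ReflTransGen r a c) (hbc : ReflTransGen r b c) :
    ReflTransGen r a b ∨ ReflTransGen r b a := by
  rw [← reflTransGen_swap] at hac hbc
  rw [← reflTransGen_swap, ← reflTransGen_swap (r := r)]
  exact (ReflTransGen.total_of_right_unique (r := Function.swap r)
    (fun _ _ _ h h' => hr h h') hac hbc).symm

variable {ι Λ : Type*} [Fintype ι] [Fintype Λ]

open Classical in
/-- The upper ends of the chains with steps `U s i j` (from `i` up to `j` along a chain labelled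
`s`), where the chains through `i` are those labelled by `S i`: each chain has exactly one, so
counting them counts the chains, including the chains without steps. -/
def chainTops (U : Λ → ι → ι → Prop) (S : ι → Finset Λ) : Finset (ι × Λ) :=
  Finset.univ.filter fun p => p.2 ∈ S p.1 ∧ ¬ ∃ j, U p.2 p.1 j

variable {U : Λ → ι → ι → Prop} {S : ι → Finset Λ}

lemma exists_mem_chainTops {α : Type*} [LinearOrder α] {s : Λ} {H : ι → α}
    (hH : ∀ i j, U s i j → H i < H j) (hS : ∀ i j, U s i j → s ∈ S j) {i : ι} (hi : s ∈ S i) :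
    ∃ j, (j, s) ∈ chainTops U S ∧ ReflTransGen (U s) i j := by
  obtain ⟨j, hj, hmax⟩ := Set.exists_max_image {j | ReflTransGen (U s) i j} H
    (Set.toFinite _) ⟨i, ReflTransGen.refl⟩
  have hsj : s ∈ S j := by
    rcases ReflTransGen.cases_tail hj with rfl | ⟨k, -, hkj⟩
    exacts [hi, hS k j hkj]
  have htop : ¬ ∃ k, U s j k := fun ⟨k, hjk⟩ => (hH j k hjk).not_ge (hmax k (hj.tail hjk))
  exact ⟨j, by simp only [chainTops, Finset.mem_filter_univ]; exact ⟨hsj, htop⟩, hj⟩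

lemma card_filter_add_card_chainTops
    [DecidablePred fun p : ι × Λ => p.2 ∈ S p.1 ∧ ∃ j, U p.2 p.1 j] :
    (Finset.univ.filter fun p : ι × Λ => p.2 ∈ S p.1 ∧ ∃ j, U p.2 p.1 j).card +
      (chainTops U S).card = ∑ i, (S i).card := by
  classical
  have hnodes : (Finset.univ.filter fun p : ι × Λ => p.2 ∈ S p.1).card = ∑ i, (S i).card := by
    rw [Finset.card_filter, Fintype.sum_prod_type]
    exact Finset.sum_congr rfl fun i _ => by simp
  have hsplit := Finset.card_filter_add_card_filter_not
    (s := Finset.univ.filter fun p : ι × Λ => p.2 ∈ S p.1) fun p => ∃ j, U p.2 p.1 j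
  rw [Finset.filter_filter, Finset.filter_filter] at hsplit
  rw [← hnodes, ← hsplit, chainTops]
  congr!

/-- Every point is determined by the upper ends of two crossing chains through it, and by Mantel's
theorem at most a quarter of the pairs of chains cross. -/
lemma four_mul_card_le_sq_card_chainTops {α : Type*} [LinearOrder α]
    {X : SimpleGraph Λ} (hX : X.CliqueFree 3) {H : Λ → ι → α}
    (hH : ∀ s i j, U s i j → H s i < H s j) (hU : ∀ s, Relator.LeftUnique (U s))
    (hS : ∀ s i j, U s i j → s ∈ S j) (hcross : ∀ i, ∃ s ∈ S i, ∃ t ∈ S i, X.Adj s t)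
    (hmeet : ∀ s t i j, X.Adj s t → (ReflTransGen (U s) i j ∨ ReflTransGen (U s) j i) →
      (ReflTransGen (U t) i j ∨ ReflTransGen (U t) j i) → i = j) :
    4 * Fintype.card ι ≤ (chainTops U S).card ^ 2 := by
  classical
  choose s hs t ht hst using hcross
  choose p hp hpU using fun i => exists_mem_chainTops (hH (s i)) (hS (s i)) (hs i)
  choose q hq hqU using fun i => exists_mem_chainTops (hH (t i)) (hS (t i)) (ht i)
  let G : SimpleGraph (chainTops U S) := X.comap fun c => c.1.2
  have hG : G.CliqueFree 3 := by
    intro T hT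
    obtain ⟨a, b, c, hab, hac, hbc, -⟩ := SimpleGraph.is3Clique_iff.mp hT
    exact hX _ (SimpleGraph.is3Clique_triple_iff.mpr ⟨hab, hac, hbc⟩)
  let e (i : ι) : Sym2 (chainTops U S) := s(⟨(p i, s i), hp i⟩, ⟨(q i, t i), hq i⟩)
  have he : Function.Injective e := by
    intro i j hij
    have hcomp {a b : Λ} {i' j' : ι} (hi : ReflTransGen (U a) i i')
        (hj : ReflTransGen (U b) j j') (hab : (i', a) = (j', b)) :
        ReflTransGen (U a) i j ∨ ReflTransGen (U a) j i := by
      obtain ⟨rfl, rfl⟩ := Prod.mk.inj hab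
      exact reflTransGen_total_of_leftUnique (hU a) hi hj
    simp only [e, Sym2.eq_iff, Subtype.mk.injEq] at hij
    rcases hij with ⟨h1, h2⟩ | ⟨h1, h2⟩
    · exact hmeet _ _ i j (hst i) (hcomp (hpU i) (hpU j) h1) (hcomp (hqU i) (hqU j) h2)
    · exact hmeet _ _ i j (hst i) (hcomp (hpU i) (hqU j) h1) (hcomp (hqU i) (hpU j) h2)
  have hcard : Fintype.card ι ≤ G.edgeFinset.card :=
    Finset.card_le_card_of_injOn e (fun i _ => by simpa [e, G] using hst i) he.injOn
  calc 4 * Fintype.card ι ≤ 4 * G.edgeFinset.card := Nat.mul_le_mul_left 4 hcard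
    _ ≤ (chainTops U S).card ^ 2 := by
      simpa using four_mul_card_edgeFinset_le_of_cliqueFree_three G hG

end Chains

lemma ceil_two_mul_sqrt_le {n k : ℕ} (h : 4 * n ≤ k ^ 2) : ⌈2 * √(n : ℝ)⌉ ≤ (k : ℤ) := by
  rw [Int.ceil_le, Int.cast_natCast]
  refine le_of_sq_le_sq ?_ k.cast_nonneg
  rw [mul_pow, Real.sq_sqrt n.cast_nonneg]
  exact_mod_cast h

section Cones

open InnerProductGeometry
open scoped RealInnerProductSpace

variable {V : Type*} [NormedAddCommGroup V] [InnerProductSpace ℝ V] {a b v w : V} {c θ : ℝ}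

lemma eq_zero_of_mem_two_cones (ha : ‖a‖ = 1) (hb : ‖b‖ = 1) (hc : 0 ≤ c)
    (hav : c * ‖v‖ ≤ |⟪a, v⟫|) (hbv : c * ‖v‖ ≤ |⟪b, v⟫|) (hab : |⟪a, b⟫| < 2 * c ^ 2 - 1) :
    v = 0 := by
  wlog hapos : 0 ≤ ⟪a, v⟫ generalizing a
  · refine this (a := -a) (by rwa [norm_neg]) ?_ ?_ ?_
    · rwa [inner_neg_left, abs_neg]
    · rwa [inner_neg_left, abs_neg]
    · rw [inner_neg_left]
      linarith
  wlog hbpos : 0 ≤ ⟪b, v⟫ generalizing b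
  · refine this (b := -b) (by rwa [norm_neg]) ?_ ?_ ?_
    · rwa [inner_neg_left, abs_neg]
    · rwa [inner_neg_right, abs_neg]
    · rw [inner_neg_left]
      linarith
  by_contra hv
  rw [abs_of_nonneg hapos] at hav
  rw [abs_of_nonneg hbpos] at hbv
  have hle : 2 * c ≤ ‖a + b‖ := by
    refine le_of_mul_le_mul_right ?_ (norm_pos_iff.mpr hv)
    calc 2 * c * ‖v‖ ≤ ⟪a + b, v⟫ := by rw [inner_add_left]; linarith
      _ ≤ ‖a + b‖ * ‖v‖ := real_inner_le_norm _ _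
  have hsq := pow_le_pow_left₀ (by positivity) hle 2
  rw [norm_add_sq_real, ha, hb] at hsq
  linarith [le_abs_self ⟪a, b⟫]

lemma angle_le_of_cos_mul_norm_le_inner (ha : ‖a‖ = 1) (hv : v ≠ 0) (hθ₀ : 0 ≤ θ) (hθ : θ ≤ π)
    (h : Real.cos θ * ‖v‖ ≤ ⟪a, v⟫) : angle a v ≤ θ := by
  refine (Real.strictAntiOn_cos.le_iff_ge ⟨hθ₀, hθ⟩ ⟨angle_nonneg a v, angle_le_pi a v⟩).mp ?_
  rwa [cos_angle, ha, one_mul, le_div_iff₀ (norm_pos_iff.mpr hv)]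

lemma angle_le_two_mul_of_mem_cone (ha : ‖a‖ = 1) (hv : v ≠ 0) (hw : w ≠ 0) (hθ₀ : 0 ≤ θ)
    (hθ : θ ≤ π) (hav : Real.cos θ * ‖v‖ ≤ ⟪a, v⟫) (haw : Real.cos θ * ‖w‖ ≤ ⟪a, w⟫) :
    angle v w ≤ 2 * θ := by
  have hv' := angle_le_of_cos_mul_norm_le_inner ha hv hθ₀ hθ hav
  have hw' := angle_le_of_cos_mul_norm_le_inner ha hw hθ₀ hθ haw
  have := angle_le_angle_add_angle v a w
  rw [angle_comm v a] at this
  linarith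

end Cones

section Sectors

open InnerProductGeometry
open scoped RealInnerProductSpace

/-- The argument of `v` in units of `π / 5`, so that the full circle has length `10`. -/
def dir (v : ℂ) : ℝ := 5 / π * v.arg

lemma exists_dir_sub_dir_eq {x y : ℂ} (hx : x ≠ 0) (hy : y ≠ 0) :
    ∃ m : ℤ, dir x - dir y = 5 / π * angle x y + 10 * m ∨
      dir x - dir y = -(5 / π * angle x y) + 10 * m := by
  have hdiv : ((x.arg - y.arg : ℝ) : Real.Angle) = ((x / y).arg : ℝ) := by
    rw [Complex.arg_div_coe_angle hx hy, Real.Angle.coe_sub]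
  obtain ⟨m, hm⟩ := Real.Angle.angle_eq_iff_two_pi_dvd_sub.mp hdiv
  have hdir : dir x - dir y = 5 / π * (x / y).arg + 10 * m := by
    rw [dir, dir, ← mul_sub, sub_eq_iff_eq_add.mp hm]
    field_simp
    ring
  refine ⟨m, ?_⟩
  rcases abs_choice (x / y).arg with h | h <;> rw [Complex.angle_eq_abs_arg hx hy, h, hdir]
  · exact Or.inl rfl
  · exact Or.inr (by ring)

lemma exists_abs_dir_sub_dir_sub_eq {x y : ℂ} (hx : x ≠ 0) (hy : y ≠ 0) :
    ∃ m : ℤ, |dir x - dir y - 5 * m| = 5 / π * |angle x y - π| := by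
  have hbend : 5 / π * |angle x y - π| = |5 / π * angle x y - 5| := by
    rw [← abs_of_pos (a := 5 / π) (by positivity), ← abs_mul, abs_of_pos (a := 5 / π)
      (by positivity), mul_sub, div_mul_cancel₀ 5 Real.pi_ne_zero]
  obtain ⟨m, hm | hm⟩ := exists_dir_sub_dir_eq hx hy <;> rw [hm, hbend]
  · exact ⟨2 * m + 1, by push_cast; ring_nf⟩
  · exact ⟨2 * m - 1, by rw [← abs_neg]; push_cast; ring_nf⟩

lemma exists_abs_dir_sub_dir_sub_le {x y : ℂ} (hx : x ≠ 0) (hy : y ≠ 0)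
    (h : |angle x y - π / 2| ≤ π / 10) :
    ∃ m : ℤ, |dir x - dir y - (5 * m + 5 / 2)| ≤ 1 / 2 := by
  have hright : |5 / π * angle x y - 5 / 2| ≤ 1 / 2 := by
    calc |5 / π * angle x y - 5 / 2| = |5 / π * (angle x y - π / 2)| := by
          congr 1
          field_simp
      _ ≤ 5 / π * (π / 10) := by
          rw [abs_mul, abs_of_pos (by positivity)]
          gcongr
      _ = 1 / 2 := by
          field_simp
          norm_num
  obtain ⟨m, hm | hm⟩ := exists_dir_sub_dir_eq hx hy <;> rw [hm]
  · refine ⟨2 * m, hright.trans_eq' ?_⟩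
    push_cast
    ring_nf
  · refine ⟨2 * m - 1, hright.trans_eq' ?_⟩
    rw [← abs_neg]
    push_cast
    ring_nf

/-- The sector containing the line `ℝ v`, when the lines through the origin are divided, from the
direction `dir = -t` on, into five equal sectors. -/
def bondLabel (t : ℝ) (v : ℂ) : ZMod 5 := (⌊dir v + t⌋ : ℤ)

/-- The unit vector on the bisector of the sector `s` of `bondLabel t`. -/
def sectorAxis (t : ℝ) (s : ZMod 5) : ℂ :=
  Complex.exp ((π / 5 * (s.val + 1 / 2 - t) : ℝ) * Complex.I)

/-- The pentagon on the five sectors: two sectors cross if they can contain the two lines of an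
almost right angle, the deviation from `π / 2` being at most half the width of a sector. -/
def crossingGraph : SimpleGraph (ZMod 5) := SimpleGraph.circulantGraph {2}

instance : DecidableRel crossingGraph.Adj :=
  inferInstanceAs (DecidableRel (SimpleGraph.circulantGraph ({2} : Set (ZMod 5))).Adj)

lemma crossingGraph_adj {a b : ZMod 5} : crossingGraph.Adj a b ↔ a - b = 2 ∨ a - b = 3 := by
  revert a b
  decide

lemma crossingGraph_cliqueFree : crossingGraph.CliqueFree 3 := by
  intro T hT
  obtain ⟨a, b, c, hab, hac, hbc, -⟩ := SimpleGraph.is3Clique_iff.mp hT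
  revert a b c
  decide

lemma exists_crossingGraph_adj (a : ZMod 5) : ∃ b, crossingGraph.Adj a b := by
  revert a
  decide

lemma norm_sectorAxis (t : ℝ) (s : ZMod 5) : ‖sectorAxis t s‖ = 1 :=
  Complex.norm_exp_ofReal_mul_I _

lemma inner_exp_exp (x y : ℝ) :
    ⟪Complex.exp (x * Complex.I), Complex.exp (y * Complex.I)⟫ = Real.cos (y - x) := by
  rw [Complex.inner, Complex.mul_re, Complex.conj_re, Complex.conj_im,
    Complex.exp_ofReal_mul_I_re, Complex.exp_ofReal_mul_I_im, Complex.exp_ofReal_mul_I_re,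
    Complex.exp_ofReal_mul_I_im, Real.cos_sub]
  ring

lemma inner_exp_mul_I (φ : ℝ) (v : ℂ) :
    ⟪Complex.exp (φ * Complex.I), v⟫ = ‖v‖ * Real.cos (v.arg - φ) := by
  conv_lhs => rw [← Complex.norm_mul_exp_arg_mul_I v]
  rw [← Complex.real_smul (x := ‖v‖), real_inner_smul_right, inner_exp_exp]

lemma abs_cos_sub_int_mul_pi (x : ℝ) (n : ℤ) : |Real.cos (x - n * π)| = |Real.cos x| := by
  simp [Real.cos_sub_int_mul_pi, abs_mul]

lemma cos_pi_div_ten_mul_norm_le_abs_inner (t : ℝ) (v : ℂ) :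
    Real.cos (π / 10) * ‖v‖ ≤ |⟪sectorAxis t (bondLabel t v), v⟫| := by
  set q := ⌊dir v + t⌋
  have hval : ((bondLabel t v).val : ℝ) = q - 5 * (q / 5 : ℤ) := by
    have : ((bondLabel t v).val : ℤ) = q - 5 * (q / 5) := by
      rw [bondLabel, ZMod.val_intCast]
      push_cast
      omega
    exact_mod_cast this
  have hcos : |Real.cos (v.arg - π / 5 * ((bondLabel t v).val + 1 / 2 - t))| =
      |Real.cos (v.arg - π / 5 * (q + 1 / 2 - t))| := by
    rw [← abs_cos_sub_int_mul_pi _ (q / 5), hval]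
    ring_nf
  have hη : |v.arg - π / 5 * (q + 1 / 2 - t)| ≤ π / 10 := by
    have hle := Int.floor_le (dir v + t)
    have hlt := Int.lt_floor_add_one (dir v + t)
    have hdir : v.arg - π / 5 * (q + 1 / 2 - t) = π / 5 * (dir v + t - q - 1 / 2) := by
      unfold dir
      field_simp
      ring
    rw [hdir, abs_mul, abs_of_pos (by positivity)]
    have : |dir v + t - q - 1 / 2| ≤ 1 / 2 := abs_le.mpr ⟨by linarith, by linarith⟩
    nlinarith [Real.pi_pos]
  rw [sectorAxis, inner_exp_mul_I, abs_mul, abs_norm, mul_comm, hcos]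
  gcongr
  refine le_trans ?_ (le_abs_self _)
  rw [← Real.cos_abs (v.arg - _)]
  exact Real.cos_le_cos_of_nonneg_of_le_pi (abs_nonneg _) (by linarith [Real.pi_pos]) hη

lemma abs_inner_sectorAxis_of_adj (t : ℝ) {a b : ZMod 5} (h : crossingGraph.Adj a b) :
    |⟪sectorAxis t a, sectorAxis t b⟫| = Real.cos (2 * π / 5) := by
  have hval : |(b.val : ℝ) - a.val| = 2 ∨ |(b.val : ℝ) - a.val| = 3 := by
    have : |(b.val : ℤ) - a.val| = 2 ∨ |(b.val : ℤ) - a.val| = 3 := by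
      revert a b
      decide
    exact_mod_cast this
  have hpos : 0 ≤ Real.cos (2 * π / 5) :=
    Real.cos_nonneg_of_neg_pi_div_two_le_of_le (by linarith [Real.pi_pos])
      (by linarith [Real.pi_pos])
  have hangle : π / 5 * (b.val + 1 / 2 - t) - π / 5 * (a.val + 1 / 2 - t) =
      π / 5 * (b.val - a.val) := by ring
  rw [sectorAxis, sectorAxis, inner_exp_exp, hangle, ← Real.cos_abs, abs_mul,
    abs_of_pos (a := π / 5) (by positivity)]
  rcases hval with h | h <;> rw [h]
  · rw [show π / 5 * 2 = 2 * π / 5 by ring, abs_of_nonneg hpos]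
  · rw [show π / 5 * 3 = π - 2 * π / 5 by ring, Real.cos_pi_sub, abs_neg, abs_of_nonneg hpos]

lemma bondLabel_neg (t : ℝ) (v : ℂ) : bondLabel t (-v) = bondLabel t v := by
  rcases eq_or_ne v 0 with rfl | hv
  · rw [neg_zero]
  obtain ⟨m, hm⟩ := exists_abs_dir_sub_dir_sub_eq (neg_ne_zero.mpr hv) hv
  rw [angle_neg_self_of_nonzero hv, sub_self, abs_zero, mul_zero, abs_eq_zero] at hm
  have hdir : dir (-v) + t = dir v + t + (5 * m : ℤ) := by push_cast; linarith
  rw [bondLabel, bondLabel, hdir, Int.floor_add_intCast]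
  push_cast
  rw [show (5 : ZMod 5) = 0 from rfl, zero_mul, add_zero]

lemma crossingGraph_adj_bondLabel (t : ℝ) {x y : ℂ} (hx : x ≠ 0) (hy : y ≠ 0)
    (h : |angle x y - π / 2| ≤ π / 10) :
    crossingGraph.Adj (bondLabel t x) (bondLabel t y) := by
  obtain ⟨l, hl⟩ := exists_abs_dir_sub_dir_sub_le hx hy h
  have hfloor : ⌊dir x + t⌋ - ⌊dir y + t⌋ = 5 * l + 2 ∨ ⌊dir x + t⌋ - ⌊dir y + t⌋ = 5 * l + 3 := by
    have hx₁ := Int.floor_le (dir x + t)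
    have hx₂ := Int.lt_floor_add_one (dir x + t)
    have hy₁ := Int.floor_le (dir y + t)
    have hy₂ := Int.lt_floor_add_one (dir y + t)
    rw [abs_le] at hl
    have hlower : 5 * l + 1 < ⌊dir x + t⌋ - ⌊dir y + t⌋ := by
      rify
      linarith
    have hupper : ⌊dir x + t⌋ - ⌊dir y + t⌋ < 5 * l + 4 := by
      rify
      linarith
    omega
  rw [crossingGraph_adj, bondLabel, bondLabel, ← Int.cast_sub]
  rcases hfloor with h | h <;> rw [h] <;> push_cast <;>
    rw [show (5 : ZMod 5) = 0 from rfl, zero_mul, zero_add]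
  exacts [Or.inl rfl, Or.inr rfl]

end Sectors

section Bonds

open InnerProductGeometry Relation
open scoped RealInnerProductSpace EuclideanGeometry

variable {ι : Type*}

/-- The framework of straight bonds `z i — z j`, `G.Adj i j`, in which any two bonds at a point
form an angle within `π / 10` of `π` or of `π / 2`. -/
def NearlyRectangular (G : SimpleGraph ι) (z : ι → ℂ) : Prop :=
  ∀ i j k, G.Adj i j → G.Adj i k → j ≠ k →
    |∠ (z j) (z i) (z k) - π| ≤ π / 10 ∨ |∠ (z j) (z i) (z k) - π / 2| ≤ π / 10

/-- A bond in the sector `s` of `bondLabel t`, traversed upwards with respect to `sectorAxis t s`.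
In a nearly rectangular framework these bonds form disjoint chains, nearly straight lines. -/
def ChainStep (G : SimpleGraph ι) (z : ι → ℂ) (t : ℝ) (s : ZMod 5) (i j : ι) : Prop :=
  G.Adj i j ∧ bondLabel t (z j - z i) = s ∧ ⟪sectorAxis t s, z i⟫ < ⟪sectorAxis t s, z j⟫

variable {G : SimpleGraph ι} {z : ι → ℂ} {t : ℝ} {s u : ZMod 5} {i j k : ι}

lemma NearlyRectangular.eq_of_angle_lt (hG : NearlyRectangular G z) (hij : G.Adj i j)
    (hik : G.Adj i k) (h : ∠ (z j) (z i) (z k) < 2 * π / 5) : j = k := by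
  by_contra hjk
  rcases hG i j k hij hik hjk with h' | h' <;>
    linarith [(abs_le.mp h').1, Real.pi_pos]

lemma NearlyRectangular.eq_of_straight (hG : NearlyRectangular G z) {l : ι} (hij : G.Adj i j)
    (hik : G.Adj i k) (hl : |∠ (z l) (z i) (z j) - π| ≤ π / 10)
    (hl' : |∠ (z l) (z i) (z k) - π| ≤ π / 10) : j = k := by
  refine hG.eq_of_angle_lt hij hik ?_
  have hneg (m : ι) : angle (-(z l - z i)) (z m - z i) = π - ∠ (z l) (z i) (z m) :=
    angle_neg_left _ _
  have htri := angle_le_angle_add_angle (z j - z i) (-(z l - z i)) (z k - z i)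
  rw [angle_comm (z j - z i) (-_), hneg, hneg] at htri
  change angle (z j - z i) (z k - z i) < _
  linarith [(abs_le.mp hl).1, (abs_le.mp hl').1, Real.pi_pos]

lemma ChainStep.cos_mul_norm_le (h : ChainStep G z t s i j) :
    Real.cos (π / 10) * ‖z j - z i‖ ≤ ⟪sectorAxis t s, z j - z i⟫ := by
  obtain ⟨-, rfl, hlt⟩ := h
  have hle := cos_pi_div_ten_mul_norm_le_abs_inner t (z j - z i)
  rwa [abs_of_pos (by rw [inner_sub_right]; linarith)] at hle

lemma NearlyRectangular.rightUnique_chainStep (hG : NearlyRectangular G z) :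
    Relator.RightUnique (ChainStep G z t s) := by
  intro i j k hj hk
  refine hG.eq_of_angle_lt hj.1 hk.1 ?_
  have hne {l : ι} (hl : ChainStep G z t s i l) : z l - z i ≠ 0 :=
    sub_ne_zero.mpr fun h => hl.2.2.ne (by rw [h])
  have := angle_le_two_mul_of_mem_cone (norm_sectorAxis t s) (hne hj) (hne hk) (by positivity)
    (by linarith [Real.pi_pos]) hj.cos_mul_norm_le hk.cos_mul_norm_le
  change angle (z j - z i) (z k - z i) < _
  linarith [Real.pi_pos]

lemma NearlyRectangular.leftUnique_chainStep (hG : NearlyRectangular G z) :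
    Relator.LeftUnique (ChainStep G z t s) := by
  intro i j k hi hj
  refine hG.eq_of_angle_lt hi.1.symm hj.1.symm ?_
  have hne {l : ι} (hl : ChainStep G z t s l k) : z k - z l ≠ 0 :=
    sub_ne_zero.mpr fun h => hl.2.2.ne (by rw [h])
  have := angle_le_two_mul_of_mem_cone (norm_sectorAxis t s) (hne hi) (hne hj) (by positivity)
    (by linarith [Real.pi_pos]) hi.cos_mul_norm_le hj.cos_mul_norm_le
  change angle (z i - z k) (z j - z k) < _
  rw [← neg_sub (z k), ← neg_sub (z k), angle_neg_neg]
  linarith [Real.pi_pos]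

lemma cos_mul_norm_le_of_reflTransGen (h : ReflTransGen (ChainStep G z t s) i j) :
    Real.cos (π / 10) * ‖z j - z i‖ ≤ ⟪sectorAxis t s, z j - z i⟫ := by
  have hcos : 0 ≤ Real.cos (π / 10) :=
    Real.cos_nonneg_of_neg_pi_div_two_le_of_le (by linarith [Real.pi_pos])
      (by linarith [Real.pi_pos])
  induction h with
  | refl => simp
  | @tail k l _ hkl ih =>
    calc Real.cos (π / 10) * ‖z l - z i‖
        ≤ Real.cos (π / 10) * (‖z l - z k‖ + ‖z k - z i‖) := by
          gcongr
          exact norm_sub_le_norm_sub_add_norm_sub _ _ _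
      _ ≤ ⟪sectorAxis t s, z l - z k⟫ + ⟪sectorAxis t s, z k - z i⟫ := by
          rw [mul_add]
          exact add_le_add hkl.cos_mul_norm_le ih
      _ = ⟪sectorAxis t s, z l - z i⟫ := by rw [← inner_add_right, sub_add_sub_cancel]

lemma eq_of_crossing_chains (hz : Function.Injective z) (hsu : crossingGraph.Adj s u)
    (hs : ReflTransGen (ChainStep G z t s) i j ∨ ReflTransGen (ChainStep G z t s) j i)
    (hu : ReflTransGen (ChainStep G z t u) i j ∨ ReflTransGen (ChainStep G z t u) j i) :
    i = j := by
  have hcone {a : ZMod 5}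
      (h : ReflTransGen (ChainStep G z t a) i j ∨ ReflTransGen (ChainStep G z t a) j i) :
      Real.cos (π / 10) * ‖z j - z i‖ ≤ |⟪sectorAxis t a, z j - z i⟫| := by
    rcases h with h | h
    · exact (cos_mul_norm_le_of_reflTransGen h).trans (le_abs_self _)
    · rw [norm_sub_rev, ← abs_neg, ← inner_neg_right, neg_sub]
      exact (cos_mul_norm_le_of_reflTransGen h).trans (le_abs_self _)
  refine (hz (sub_eq_zero.mp (eq_zero_of_mem_two_cones (norm_sectorAxis t s) (norm_sectorAxis t u)
    (Real.cos_nonneg_of_neg_pi_div_two_le_of_le ?_ ?_) (hcone hs) (hcone hu) ?_))).symm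
  · linarith [Real.pi_pos]
  · linarith [Real.pi_pos]
  · rw [abs_inner_sectorAxis_of_adj t hsu, ← Real.cos_two_mul]
    exact Real.cos_lt_cos_of_nonneg_of_le_pi (by positivity) (by linarith [Real.pi_pos])
      (by linarith [Real.pi_pos])

lemma chainStep_or_chainStep (t : ℝ) (hij : G.Adj i j) (hz : z i ≠ z j) :
    ChainStep G z t (bondLabel t (z j - z i)) i j ∨
      ChainStep G z t (bondLabel t (z i - z j)) j i := by
  have hlabel : bondLabel t (z i - z j) = bondLabel t (z j - z i) := by
    rw [← neg_sub, bondLabel_neg]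
  have hcos : 0 < Real.cos (π / 10) :=
    Real.cos_pos_of_mem_Ioo ⟨by linarith [Real.pi_pos], by linarith [Real.pi_pos]⟩
  have hne := (mul_pos hcos (norm_pos_iff.mpr (sub_ne_zero.mpr hz.symm))).trans_le
    (cos_pi_div_ten_mul_norm_le_abs_inner t (z j - z i))
  rw [abs_pos, inner_sub_right, sub_ne_zero] at hne
  rcases lt_or_gt_of_ne hne with h | h
  · exact Or.inr ⟨hij.symm, rfl, by rwa [hlabel]⟩
  · exact Or.inl ⟨hij, rfl, h⟩

variable [Fintype ι] [DecidableRel G.Adj]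

lemma NearlyRectangular.card_edgeFinset_add_card_chainTops_le (hG : NearlyRectangular G z)
    (hz : Function.Injective z) {S : ι → Finset (ZMod 5)}
    (hS : ∀ i j, G.Adj i j → bondLabel t (z j - z i) ∈ S i) :
    G.edgeFinset.card + (chainTops (ChainStep G z t) S).card ≤ ∑ i, (S i).card := by
  classical
  rw [← card_filter_add_card_chainTops (U := ChainStep G z t)]
  refine Nat.add_le_add_right (Finset.card_le_card_of_forall_subsingleton
    (fun e p => ∃ j, ChainStep G z t p.2 p.1 j ∧ e = s(p.1, j)) ?_ ?_) _
  · intro e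
    induction e with | h i j =>
    intro hij
    rw [SimpleGraph.mem_edgeFinset, SimpleGraph.mem_edgeSet] at hij
    simp only [Finset.mem_filter_univ]
    rcases chainStep_or_chainStep t hij (hz.ne hij.ne) with h | h
    · exact ⟨(i, _), ⟨hS i j hij, j, h⟩, j, h, rfl⟩
    · exact ⟨(j, _), ⟨hS j i hij.symm, i, h⟩, i, h, Sym2.eq_swap⟩
  · rintro p - e ⟨-, j, hj, rfl⟩ e' ⟨-, k, hk, rfl⟩
    rw [hG.rightUnique_chainStep hj hk]

lemma exists_shift_sum_card_bondLabel_ne_le (G : SimpleGraph ι) [DecidableRel G.Adj]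
    (hz : Function.Injective z) :
    ∃ t : ℝ, ((∑ i, ((G.neighborFinset i).offDiag.filter fun p =>
        |∠ (z p.1) (z i) (z p.2) - π| ≤ π / 10 ∧
          bondLabel t (z p.1 - z i) ≠ bondLabel t (z p.2 - z i)).card : ℕ) : ℝ) ≤
      ∑ i, ∑ p ∈ (G.neighborFinset i).offDiag with |∠ (z p.1) (z i) (z p.2) - π| ≤ π / 10,
        5 / π * |∠ (z p.1) (z i) (z p.2) - π| := by
  have hcircle : ∀ q ∈ (Finset.univ : Finset ι).sigma fun i => (G.neighborFinset i).offDiag.filter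
      fun p => |∠ (z p.1) (z i) (z p.2) - π| ≤ π / 10,
      ∃ m : ℤ, |dir (z q.2.1 - z q.1) - dir (z q.2.2 - z q.1) - (5 : ℕ) * m| ≤
        5 / π * |∠ (z q.2.1) (z q.1) (z q.2.2) - π| := by
    intro q hq
    simp only [Finset.mem_sigma, Finset.mem_filter, Finset.mem_offDiag,
      SimpleGraph.mem_neighborFinset] at hq
    obtain ⟨m, hm⟩ := exists_abs_dir_sub_dir_sub_eq (sub_ne_zero.mpr (hz.ne hq.2.1.1.ne'))
      (sub_ne_zero.mpr (hz.ne hq.2.1.2.1.ne'))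
    exact ⟨m, hm.le⟩
  obtain ⟨t, ht⟩ := exists_shift_card_floor_ne_le _ _ _ _ hcircle
  refine ⟨t, le_of_eq_of_le ?_ (ht.trans_eq (Finset.sum_sigma _ _ _))⟩
  rw [Finset.card_filter, Finset.sum_sigma]
  simp only [← Finset.card_filter, Finset.filter_filter]
  rfl

lemma NearlyRectangular.exists_label_sets (hG : NearlyRectangular G z)
    (hz : Function.Injective z) (t : ℝ) (i : ι) :
    ∃ S : Finset (ZMod 5), (∀ j, G.Adj i j → bondLabel t (z j - z i) ∈ S) ∧
      (∃ a ∈ S, ∃ b ∈ S, crossingGraph.Adj a b) ∧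
      2 * S.card ≤ 4 + ((G.neighborFinset i).offDiag.filter fun p =>
        |∠ (z p.1) (z i) (z p.2) - π| ≤ π / 10 ∧
          bondLabel t (z p.1 - z i) ≠ bondLabel t (z p.2 - z i)).card := by
  obtain ⟨S, hS, hcross, hcard⟩ := exists_label_set crossingGraph_cliqueFree
    exists_crossingGraph_adj (N := G.neighborFinset i) (s := fun j => bondLabel t (z j - z i))
    (opp := fun j k => |∠ (z j) (z i) (z k) - π| ≤ π / 10)
    (fun j k h => by rwa [EuclideanGeometry.angle_comm])
    (fun j _ k hk l hl hjk hjl => by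
      rw [SimpleGraph.mem_neighborFinset] at hk hl
      exact hG.eq_of_straight hk hl hjk hjl)
    (fun j hj k hk hjk => by
      rw [SimpleGraph.mem_neighborFinset] at hj hk
      exact (hG i j k hj hk hjk).imp_right (crossingGraph_adj_bondLabel t
        (sub_ne_zero.mpr (hz.ne hj.ne')) (sub_ne_zero.mpr (hz.ne hk.ne'))))
  exact ⟨S, fun j hj => hS j (by rwa [SimpleGraph.mem_neighborFinset]), hcross, hcard⟩

lemma NearlyRectangular.card_edgeFinset_add_ceil_le (hG : NearlyRectangular G z)
    (hz : Function.Injective z) :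
    (G.edgeFinset.card : ℝ) + ⌈2 * √(Fintype.card ι)⌉ ≤ 2 * Fintype.card ι +
      1 / 2 * ∑ i, ∑ p ∈ (G.neighborFinset i).offDiag with |∠ (z p.1) (z i) (z p.2) - π| ≤ π / 10,
        5 / π * |∠ (z p.1) (z i) (z p.2) - π| := by
  obtain ⟨t, ht⟩ := exists_shift_sum_card_bondLabel_ne_le G hz
  choose S hS hcross hcard using hG.exists_label_sets hz t
  have hedges := hG.card_edgeFinset_add_card_chainTops_le hz hS
  have htops := ceil_two_mul_sqrt_le (four_mul_card_le_sq_card_chainTops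
    (U := ChainStep G z t) (S := S) crossingGraph_cliqueFree
    (H := fun s i => ⟪sectorAxis t s, z i⟫) (fun _ _ _ h => h.2.2)
    (fun _ => hG.leftUnique_chainStep)
    (fun s i j h => by
      rw [← h.2.1, ← neg_sub, bondLabel_neg]
      exact hS j i h.1.symm)
    hcross (fun _ _ _ _ hsu => eq_of_crossing_chains hz hsu))
  have hlabels := Finset.sum_le_sum fun i (_ : i ∈ Finset.univ) => hcard i
  rw [← Finset.mul_sum, Finset.sum_add_distrib, Finset.sum_const, Finset.card_univ,
    smul_eq_mul] at hlabels
  rify at hedges htops hlabels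
  push_cast at ht
  linarith

end Bonds

section AngleCost

/-- The minorant of the three-body potentials: proportional to the bend at almost straight angles,
`0` at almost right angles, and `2` at all others. -/
def angleCost (θ : ℝ) : ℝ :=
  if |θ - π| ≤ π / 10 then 5 / π * |θ - π|
  else if |(|θ - π| - π / 2)| ≤ π / 10 then 0
  else 2

lemma angleCost_nonneg (θ : ℝ) : 0 ≤ angleCost θ := by
  unfold angleCost
  split_ifs <;> positivity

lemma angleCost_two_pi_sub (θ : ℝ) : angleCost (2 * π - θ) = angleCost θ := by
  have habs : |2 * π - θ - π| = |θ - π| := by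
    rw [← abs_neg]
    ring_nf
  rw [angleCost, angleCost, habs]

lemma angleCost_eq_two {θ : ℝ} (hθ : θ ≤ π) (hπ : ¬ |θ - π| ≤ π / 10)
    (hright : ¬ |θ - π / 2| ≤ π / 10) : angleCost θ = 2 := by
  have habs : |(|θ - π| - π / 2)| = |θ - π / 2| := by
    rw [abs_of_nonpos (sub_nonpos.mpr hθ), ← abs_neg]
    ring_nf
  rw [angleCost, if_neg hπ, habs, if_neg hright]

lemma angleCost_le_two (θ : ℝ) : angleCost θ ≤ 2 := by
  rw [angleCost]
  split_ifs with h
  · calc 5 / π * |θ - π| ≤ 5 / π * (π / 10) := by gcongr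
      _ ≤ 2 := by field_simp; norm_num
  · norm_num
  · exact le_rfl

lemma angleCost_pi : angleCost π = 0 := by
  rw [angleCost, sub_self, abs_zero, if_pos (by positivity), mul_zero]

lemma angleCost_pi_div_two : angleCost (π / 2) = 0 := by
  have habs : |π / 2 - π| = π / 2 := by
    rw [abs_of_nonpos] <;> linarith [Real.pi_pos]
  rw [angleCost, habs, if_neg (by linarith [Real.pi_pos]), sub_self, abs_zero,
    if_pos (by positivity)]

lemma angleCost_eq_zero_of_mem {θ : ℝ} (hθ : θ ∈ ({π / 2, π, 3 * π / 2} : Set ℝ)) :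
    angleCost θ = 0 := by
  rcases hθ with rfl | rfl | rfl
  · exact angleCost_pi_div_two
  · exact angleCost_pi
  · rw [show 3 * π / 2 = 2 * π - π / 2 by ring, angleCost_two_pi_sub, angleCost_pi_div_two]

lemma angleCost_eq_zero_of_almost_right {θ : ℝ} (hθ : |(|θ - π| - π / 2)| ≤ π / 10) :
    angleCost θ = 0 := by
  have := abs_le.mp hθ
  rw [angleCost, if_neg (by linarith [Real.pi_pos]), if_pos hθ]

end AngleCost

section Pruning

open scoped EuclideanGeometry

variable {ι : Type*} [Fintype ι]

/-- The ordered pairs of bonds at `i` which violate `NearlyRectangular`. -/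
def badPairs (G : SimpleGraph ι) [DecidableRel G.Adj] (z : ι → ℂ) (i : ι) : Finset (ι × ι) :=
  (G.neighborFinset i).offDiag.filter fun p =>
    ¬ |∠ (z p.1) (z i) (z p.2) - π| ≤ π / 10 ∧ ¬ |∠ (z p.1) (z i) (z p.2) - π / 2| ≤ π / 10

/-- The cost of all angles of the framework `(G, z)`; the factor `1 / 2` compensates for counting
each of them twice. -/
def bendingCost (G : SimpleGraph ι) [DecidableRel G.Adj] (z : ι → ℂ) : ℝ :=
  1 / 2 * ∑ i, ∑ p ∈ (G.neighborFinset i).offDiag, angleCost (∠ (z p.1) (z i) (z p.2))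

lemma exists_nearlyRectangular_le (G : SimpleGraph ι) [DecidableRel G.Adj] (z : ι → ℂ) :
    ∃ (H : SimpleGraph ι) (_ : DecidableRel H.Adj), H ≤ G ∧ NearlyRectangular H z ∧
      G.edgeFinset.card ≤ H.edgeFinset.card + ∑ i, (badPairs G z i).card := by
  classical
  let D : Finset (Sym2 ι) := (Finset.univ.sigma (badPairs G z)).image fun q => s(q.1, q.2.1)
  refine ⟨G.deleteEdges D, inferInstance, G.deleteEdges_le _, ?_, ?_⟩
  · intro i j k hij hik hjk
    rw [SimpleGraph.deleteEdges_adj] at hij hik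
    by_contra! hbad
    refine hij.2 (Finset.mem_coe.mpr (Finset.mem_image.mpr ⟨⟨i, j, k⟩, ?_, rfl⟩))
    simp only [Finset.mem_sigma, Finset.mem_univ, badPairs, Finset.mem_filter, Finset.mem_offDiag,
      SimpleGraph.mem_neighborFinset, not_le, true_and]
    exact ⟨⟨hij.1, hik.1, hjk⟩, hbad⟩
  · rw [SimpleGraph.edgeFinset_deleteEdges, ← Finset.card_sigma]
    have hD : D.card ≤ _ := Finset.card_image_le
    have := Finset.le_card_sdiff D G.edgeFinset
    omega

lemma sum_straight_add_two_mul_card_badPairs_le {G H : SimpleGraph ι} [DecidableRel G.Adj]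
    [DecidableRel H.Adj] (hHG : H ≤ G) (z : ι → ℂ) (i : ι) :
    (∑ p ∈ (H.neighborFinset i).offDiag with |∠ (z p.1) (z i) (z p.2) - π| ≤ π / 10,
        5 / π * |∠ (z p.1) (z i) (z p.2) - π|) + 2 * (badPairs G z i).card ≤
      ∑ p ∈ (G.neighborFinset i).offDiag, angleCost (∠ (z p.1) (z i) (z p.2)) := by
  classical
  have hN : H.neighborFinset i ⊆ G.neighborFinset i := fun j hj => by
    rw [SimpleGraph.mem_neighborFinset] at hj ⊢
    exact hHG hj
  have hbad : (2 : ℝ) * (badPairs G z i).card =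
      ∑ p ∈ badPairs G z i, angleCost (∠ (z p.1) (z i) (z p.2)) := by
    rw [mul_comm, ← nsmul_eq_mul, ← Finset.sum_const]
    refine Finset.sum_congr rfl fun p hp => (angleCost_eq_two (EuclideanGeometry.angle_le_pi _ _ _)
      (Finset.mem_filter.mp hp).2.1 (Finset.mem_filter.mp hp).2.2).symm
  have hstraight : ∀ p ∈ (H.neighborFinset i).offDiag.filter
      fun p => |∠ (z p.1) (z i) (z p.2) - π| ≤ π / 10,
      5 / π * |∠ (z p.1) (z i) (z p.2) - π| = angleCost (∠ (z p.1) (z i) (z p.2)) :=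
    fun p hp => (if_pos (Finset.mem_filter.mp hp).2).symm
  rw [hbad, Finset.sum_congr rfl hstraight, ← Finset.sum_union]
  · refine Finset.sum_le_sum_of_subset_of_nonneg (Finset.union_subset ?_ ?_)
      fun p _ _ => angleCost_nonneg _
    · exact (Finset.filter_subset _ _).trans (Finset.offDiag_mono hN)
    · exact Finset.filter_subset _ _
  · exact Finset.disjoint_left.mpr fun p hp hp' =>
      (Finset.mem_filter.mp hp').2.1 (Finset.mem_filter.mp hp).2

theorem card_edgeFinset_add_ceil_le_bendingCost (G : SimpleGraph ι) [DecidableRel G.Adj]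
    {z : ι → ℂ} (hz : Function.Injective z) :
    (G.edgeFinset.card : ℝ) + ⌈2 * √(Fintype.card ι)⌉ ≤ 2 * Fintype.card ι + bendingCost G z := by
  obtain ⟨H, _, hHG, hH, hcard⟩ := exists_nearlyRectangular_le G z
  have hbound := hH.card_edgeFinset_add_ceil_le hz
  have hcost := Finset.sum_le_sum fun i (_ : i ∈ Finset.univ) =>
    sum_straight_add_two_mul_card_badPairs_le hHG z i
  rw [Finset.sum_add_distrib, ← Finset.mul_sum] at hcost
  rify at hcard
  rw [bendingCost]
  linarith

end Pruning

section Connectivity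

lemma ceil_two_mul_sqrt_add_lt {a b : ℕ} (ha : 1 ≤ a) (hb : 1 ≤ b) :
    ⌈2 * √((a + b : ℕ) : ℝ)⌉ < ⌈2 * √(a : ℝ)⌉ + ⌈2 * √(b : ℝ)⌉ := by
  have hp : 1 ≤ √(a : ℝ) := Real.one_le_sqrt.mpr (by exact_mod_cast ha)
  have hq : 1 ≤ √(b : ℝ) := Real.one_le_sqrt.mpr (by exact_mod_cast hb)
  have hsqrt : √((a + b : ℕ) : ℝ) ≤ √a + √b - 1 / 2 := by
    rw [Real.sqrt_le_left (by linarith)]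
    have hp' := Real.sq_sqrt (Nat.cast_nonneg (α := ℝ) a)
    have hq' := Real.sq_sqrt (Nat.cast_nonneg (α := ℝ) b)
    push_cast
    nlinarith
  rw [← Int.le_sub_one_iff, Int.ceil_le, Int.cast_sub, Int.cast_add, Int.cast_one]
  linarith [Int.le_ceil (2 * √(a : ℝ)), Int.le_ceil (2 * √(b : ℝ))]

variable {ι : Type*} {G : SimpleGraph ι}

lemma ncard_edgeSet_le_induce_add_induce_compl [Finite ι] {C : Set ι}
    (hC : ∀ i j, G.Adj i j → (i ∈ C ↔ j ∈ C)) :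
    G.edgeSet.ncard ≤ (G.induce C).edgeSet.ncard + (G.induce Cᶜ).edgeSet.ncard := by
  have hsub : G.edgeSet ⊆ Sym2.map Subtype.val '' (G.induce C).edgeSet ∪
      Sym2.map Subtype.val '' (G.induce Cᶜ).edgeSet := by
    intro e
    induction e with | h i j =>
    intro hij
    by_cases hi : i ∈ C
    · exact Or.inl ⟨s(⟨i, hi⟩, ⟨j, (hC i j hij).mp hi⟩), hij, rfl⟩
    · exact Or.inr ⟨s(⟨i, hi⟩, ⟨j, fun hj => hi ((hC i j hij).mpr hj)⟩), hij, rfl⟩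
  calc G.edgeSet.ncard ≤ _ := Set.ncard_le_ncard hsub (Set.toFinite _)
    _ ≤ _ := Set.ncard_union_le _ _
    _ ≤ _ := add_le_add (Set.ncard_image_le (Set.toFinite _)) (Set.ncard_image_le (Set.toFinite _))

lemma preconnected_of_maximal_edges [Fintype ι]
    (hbound : ∀ C : Set ι, ((G.induce C).edgeSet.ncard : ℤ) + ⌈2 * √(C.ncard : ℝ)⌉ ≤ 2 * C.ncard)
    (hmax : (2 * Fintype.card ι : ℤ) ≤ G.edgeSet.ncard + ⌈2 * √(Fintype.card ι : ℝ)⌉) :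
    G.Preconnected := by
  intro i j
  by_contra hij
  let C : Set ι := {k | G.Reachable i k}
  have hi : 1 ≤ C.ncard := (Set.ncard_pos (Set.toFinite _)).mpr ⟨i, SimpleGraph.Reachable.refl i⟩
  have hj : 1 ≤ Cᶜ.ncard := (Set.ncard_pos (Set.toFinite _)).mpr ⟨j, hij⟩
  have hsplit := ncard_edgeSet_le_induce_add_induce_compl (G := G) (C := C) fun k l hkl =>
    ⟨fun h => h.trans hkl.reachable, fun h => h.trans hkl.symm.reachable⟩
  have hceil := ceil_two_mul_sqrt_add_lt hi hj
  have hcard := Set.ncard_add_ncard_compl C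
  rw [Nat.card_eq_fintype_card] at hcard
  rw [hcard] at hceil
  have hC := hbound C
  have hC' := hbound Cᶜ
  omega

end Connectivity

section RightAngles

open InnerProductGeometry
open scoped EuclideanGeometry

lemma sub_mem_of_reachable {ι R V : Type*} [Ring R] [AddCommGroup V] [Module R V]
    {G : SimpleGraph ι} {z : ι → V} {M : Submodule R V} {i j k : ι}
    (hratio : ∀ i j k, G.Adj i j → G.Adj i k → ∃ r : R, z k - z i = r • (z j - z i))
    (hij : G.Adj i j) (hj : z j - z i ∈ M) (hik : G.Reachable i k) : z k - z i ∈ M := by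
  suffices h : z k - z i ∈ M ∧ ∀ l, G.Adj k l → z l - z k ∈ M from h.1
  rw [SimpleGraph.reachable_iff_reflTransGen] at hik
  induction hik with
  | refl =>
    refine ⟨by simp, fun l hil => ?_⟩
    obtain ⟨r, hr⟩ := hratio i j l hij hil
    exact hr ▸ M.smul_mem r hj
  | @tail k l _ hkl ih =>
    have hl := ih.2 l hkl
    refine ⟨sub_add_sub_cancel (z l) (z k) (z i) ▸ M.add_mem hl ih.1, fun m hlm => ?_⟩
    obtain ⟨r, hr⟩ := hratio l k m hkl.symm hlm
    exact hr ▸ M.smul_mem r (neg_sub (z l) (z k) ▸ M.neg_mem hl)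

lemma exists_gaussianInt_mul_eq {a b : ℂ} (ha : a ≠ 0) (hab : ‖a‖ = ‖b‖)
    (h : angle a b = π / 2 ∨ angle a b = π) : ∃ g : GaussianInt, b = g * a := by
  have hb : b ≠ 0 := norm_pos_iff.mp (hab ▸ norm_pos_iff.mpr ha)
  have hpolar : b / a = Complex.exp ((b / a).arg * Complex.I) := by
    conv_lhs => rw [← Complex.norm_mul_exp_arg_mul_I (b / a), norm_div, ← hab,
      div_self (norm_ne_zero_iff.mpr ha), Complex.ofReal_one, one_mul]
  suffices h : ∃ g : GaussianInt, b / a = g from h.imp fun g hg => (div_eq_iff ha).mp hg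
  rw [angle_comm, Complex.angle_eq_abs_arg hb ha, abs_eq (by positivity),
    abs_eq (by positivity)] at h
  rcases h with (h | h) | (h | h) <;> rw [hpolar, h]
  · exact ⟨⟨0, 1⟩, by simp [GaussianInt.toComplex_def]⟩
  · exact ⟨⟨0, -1⟩, by simp [GaussianInt.toComplex_def, Complex.exp_neg]⟩
  · exact ⟨-1, by simp⟩
  · exact ⟨-1, by simp⟩

/-- The framework of straight bonds `z i — z j`, `G.Adj i j`, in which any two bonds at a point
form an angle of `π / 2` or `π`. -/
def RightAngled {ι : Type*} (G : SimpleGraph ι) (z : ι → ℂ) : Prop :=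
  ∀ i j k, G.Adj i j → G.Adj i k → j ≠ k →
    ∠ (z j) (z i) (z k) = π / 2 ∨ ∠ (z j) (z i) (z k) = π

variable {ι : Type*} {G : SimpleGraph ι} {z : ι → ℂ}

lemma RightAngled.exists_gaussianInt_coordinates (hG : RightAngled G z)
    (hunit : ∀ i j, G.Adj i j → ‖z j - z i‖ = 1) (hconn : G.Preconnected) (i : ι) :
    ∃ u : ℂ, ‖u‖ = 1 ∧ ∀ j, ∃ g : GaussianInt, z j - z i = g * u := by
  by_cases hi : ∃ j, G.Adj i j
  · obtain ⟨j, hij⟩ := hi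
    let R := GaussianInt.toComplex.range
    have hratio (i j k : ι) (hij : G.Adj i j) (hik : G.Adj i k) :
        ∃ r : R, z k - z i = r • (z j - z i) := by
      rcases eq_or_ne j k with rfl | hjk
      · exact ⟨1, (one_smul R _).symm⟩
      have hne : z j - z i ≠ 0 := norm_ne_zero_iff.mp (by rw [hunit i j hij]; exact one_ne_zero)
      obtain ⟨g, hg⟩ := exists_gaussianInt_mul_eq hne
        ((hunit i j hij).trans (hunit i k hik).symm) (hG i j k hij hik hjk)
      exact ⟨⟨g, g, rfl⟩, hg⟩
    refine ⟨z j - z i, hunit i j hij, fun k => ?_⟩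
    obtain ⟨⟨-, g, rfl⟩, hg⟩ := Submodule.mem_span_singleton.mp <|
      sub_mem_of_reachable hratio hij (Submodule.mem_span_singleton_self (R := R) _) (hconn i k)
    exact ⟨g, hg.symm⟩
  · refine ⟨1, norm_one, fun j => ⟨0, ?_⟩⟩
    have hj : i = j := by
      rcases Relation.ReflTransGen.cases_head
        ((SimpleGraph.reachable_iff_reflTransGen i j).mp (hconn i j)) with h | ⟨k, hik, -⟩
      exacts [h, absurd ⟨k, hik⟩ hi]
    simp [hj]

variable [Fintype ι]

lemma RightAngled.bendingCost_eq_zero [DecidableRel G.Adj] (hG : RightAngled G z) :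
    bendingCost G z = 0 := by
  refine mul_eq_zero_of_right _ (Finset.sum_eq_zero fun i _ => Finset.sum_eq_zero fun p hp => ?_)
  simp only [Finset.mem_offDiag, SimpleGraph.mem_neighborFinset] at hp
  rcases hG i p.1 p.2 hp.1 hp.2.1 hp.2.2 with h | h <;> rw [h]
  exacts [angleCost_pi_div_two, angleCost_pi]

lemma RightAngled.card_edgeFinset_add_ceil_le [DecidableRel G.Adj]
    (hG : RightAngled G z) (hz : Function.Injective z) :
    (G.edgeFinset.card : ℤ) + ⌈2 * √(Fintype.card ι)⌉ ≤ 2 * Fintype.card ι := by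
  have := card_edgeFinset_add_ceil_le_bendingCost G hz
  rw [hG.bendingCost_eq_zero, add_zero] at this
  exact_mod_cast this

lemma RightAngled.preconnected [DecidableRel G.Adj] (hG : RightAngled G z)
    (hz : Function.Injective z)
    (hmax : (2 * Fintype.card ι : ℤ) ≤ G.edgeFinset.card + ⌈2 * √(Fintype.card ι : ℝ)⌉) :
    G.Preconnected := by
  classical
  refine preconnected_of_maximal_edges (fun C => ?_) ?_
  · have hC : RightAngled (G.induce C) (fun i => z i) := fun i j k hij hik hjk =>
      hG i j k hij hik (Subtype.coe_ne_coe.mpr hjk)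
    have := hC.card_edgeFinset_add_ceil_le (hz.comp Subtype.val_injective)
    rwa [← Nat.card_eq_fintype_card, ← Set.ncard_coe_finset, SimpleGraph.coe_edgeFinset,
      Nat.card_coe_set_eq] at this
  · rwa [← SimpleGraph.coe_edgeFinset, Set.ncard_coe_finset]

end RightAngles

section Energy

open InnerProductGeometry
open scoped EuclideanGeometry

/-- The identification of the plane with the complex numbers. -/
def toComplex : Pt ≃ₗᵢ[ℝ] ℂ := Complex.orthonormalBasisOneI.repr.symm

lemma toComplex_apply (p : Pt) : toComplex p = ⟨p 0, p 1⟩ := by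
  rw [← Complex.re_add_im (⟨p 0, p 1⟩ : ℂ)]
  simp [toComplex, ← OrthonormalBasis.sum_repr_symm, Fin.sum_univ_two,
    Complex.coe_orthonormalBasisOneI]

lemma cwAngle_eq_angle_or {u v : Pt} (hu : u ≠ 0) (hv : v ≠ 0) :
    cwAngle u v = angle (toComplex u) (toComplex v) ∨
      cwAngle u v = 2 * π - angle (toComplex u) (toComplex v) := by
  have hu' : toComplex u ≠ 0 := toComplex.map_eq_zero_iff.not.mpr hu
  have hv' : toComplex v ≠ 0 := toComplex.map_eq_zero_iff.not.mpr hv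
  have harg : (toComplex u * (starRingEnd ℂ) (toComplex v)).arg =
      (toComplex u / toComplex v).arg := by
    rw [div_eq_mul_inv, Complex.inv_def, ← mul_assoc,
      Complex.arg_mul_real (inv_pos.mpr (Complex.normSq_pos.mpr hv'))]
  rw [toComplex_apply, toComplex_apply] at harg
  rw [Complex.angle_eq_abs_arg hu' hv', toComplex_apply, toComplex_apply, ← harg]
  unfold cwAngle
  dsimp only
  split_ifs with h
  · right
    rw [abs_of_neg h]
    ring
  · left
    rw [abs_of_nonneg (not_lt.mp h)]

lemma angleCost_cwAngle {u v : Pt} (hu : u ≠ 0) (hv : v ≠ 0) :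
    angleCost (cwAngle u v) = angleCost (angle (toComplex u) (toComplex v)) := by
  rcases cwAngle_eq_angle_or hu hv with h | h <;> rw [h]
  exact angleCost_two_pi_sub _

lemma cwAngle_mem_Icc {u v : Pt} (hu : u ≠ 0) (hv : v ≠ 0) :
    cwAngle u v ∈ Set.Icc 0 (2 * π) := by
  have h₀ := angle_nonneg (toComplex u) (toComplex v)
  have h₁ := angle_le_pi (toComplex u) (toComplex v)
  rcases cwAngle_eq_angle_or hu hv with h | h <;> rw [h] <;> constructor <;> linarith

lemma angle_eq_of_cwAngle_mem {u v : Pt} (hu : u ≠ 0) (hv : v ≠ 0)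
    (h : cwAngle u v ∈ ({π / 2, π, 3 * π / 2} : Set ℝ)) :
    angle (toComplex u) (toComplex v) = π / 2 ∨ angle (toComplex u) (toComplex v) = π := by
  have hπ := Real.pi_pos
  have hle := angle_le_pi (toComplex u) (toComplex v)
  rcases cwAngle_eq_angle_or hu hv with h' | h' <;> rw [h'] at h <;> rcases h with h | h | h
  · exact Or.inl h
  · exact Or.inr h
  · rw [Set.mem_singleton_iff] at h
    linarith
  · linarith
  · exact Or.inr (by linarith)
  · rw [Set.mem_singleton_iff] at h
    exact Or.inl (by linarith)

lemma sum_eq_coe_sum_toReal {κ : Type*} {s : Finset κ} {f : κ → EReal}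
    (hf : ∀ k ∈ s, f k ≠ ⊥) (hs : ∑ k ∈ s, f k ≠ ⊤) :
    (∀ k ∈ s, f k = ((f k).toReal : EReal)) ∧
      ∑ k ∈ s, f k = ((∑ k ∈ s, (f k).toReal : ℝ) : EReal) := by
  classical
  induction s using Finset.induction_on with
  | empty => simp
  | insert a s ha ih =>
    have hbot : ∑ k ∈ s, f k ≠ ⊥ :=
      Finset.sum_induction f (· ≠ ⊥) (fun _ _ h h' => EReal.add_ne_bot_iff.mpr ⟨h, h'⟩)
        EReal.zero_ne_bot fun k hk => hf k (Finset.mem_insert_of_mem hk)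
    have hfa := hf a (Finset.mem_insert_self _ _)
    rw [Finset.sum_insert ha, EReal.add_ne_top_iff_ne_top₂ hfa hbot] at hs
    obtain ⟨ih_each, ih_sum⟩ := ih (fun k hk => hf k (Finset.mem_insert_of_mem hk)) hs.2
    have ha_real : f a = ((f a).toReal : EReal) := (EReal.coe_toReal hs.1 hfa).symm
    refine ⟨(Finset.forall_mem_insert _ _ _).mpr ⟨ha_real, ih_each⟩, ?_⟩
    rw [Finset.sum_insert ha, Finset.sum_insert ha, ih_sum, EReal.coe_add, ← ha_real]

/-- The graph of the bonds of a configuration: the pairs of distinct points at distance at most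
`r0`. -/
def bondGraph {ι P : Type*} [PseudoMetricSpace P] (r0 : ℝ) (x : ι → P) : SimpleGraph ι where
  Adj i j := i ≠ j ∧ dist (x i) (x j) ≤ r0
  symm := ⟨fun _ _ h => ⟨h.1.symm, dist_comm (x _) (x _) ▸ h.2⟩⟩
  loopless := ⟨fun _ h => h.1 rfl⟩

instance {ι P : Type*} [PseudoMetricSpace P] (r0 : ℝ) (x : ι → P) :
    DecidableRel (bondGraph r0 x).Adj := Classical.decRel _

lemma bondGraph_adj {ι P : Type*} [PseudoMetricSpace P] {r0 : ℝ} {x : ι → P} {i j : ι} :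
    (bondGraph r0 x).Adj i j ↔ i ≠ j ∧ dist (x i) (x j) ≤ r0 := Iff.rfl

variable {n : ℕ} {r0 : ℝ} {v2 : ℝ → EReal} {v3 : ℝ → ℝ} {x : Fin n → Pt}

lemma exists_pairEnergy_of_energy_eq (hv2 : ∀ r, 0 ≤ r → -1 ≤ v2 r) {c : ℝ}
    (hE : energy r0 v2 v3 x = c) :
    ∃ w : Fin n → Fin n → ℝ, (∀ i, ∀ j ∈ Finset.univ.erase i, v2 (dist (x i) (x j)) = w i j) ∧
      1 / 2 * ∑ i, ∑ j ∈ Finset.univ.erase i, w i j +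
        1 / 2 * ∑ i, ∑ p ∈ ((bondGraph r0 x).neighborFinset i).offDiag,
          v3 (cwAngle (x p.1 - x i) (x p.2 - x i)) = c := by
  have hpairs : ∑ i, ∑ j, (if j ≠ i then v2 (dist (x i) (x j)) else 0) =
      ∑ q ∈ Finset.univ.sigma fun i => Finset.univ.erase i, v2 (dist (x q.1) (x q.2)) := by
    simp only [Finset.sum_sigma, ← Finset.sum_filter, Finset.filter_ne']
  have htriples (i : Fin n) : (∑ j, ∑ k,
      if i ≠ j ∧ i ≠ k ∧ j ≠ k ∧ dist (x i) (x j) ≤ r0 ∧ dist (x i) (x k) ≤ r0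
        then v3 (cwAngle (x j - x i) (x k - x i)) else 0) =
      ∑ p ∈ ((bondGraph r0 x).neighborFinset i).offDiag,
        v3 (cwAngle (x p.1 - x i) (x p.2 - x i)) := by
    rw [← Fintype.sum_prod_type', ← Finset.sum_filter]
    refine Finset.sum_congr (Finset.ext fun p => ?_) fun _ _ => rfl
    simp only [Finset.mem_filter_univ, Finset.mem_offDiag, SimpleGraph.mem_neighborFinset,
      bondGraph_adj]
    tauto
  simp only [energy, hpairs, htriples] at hE
  obtain ⟨hreal, hsum⟩ := sum_eq_coe_sum_toReal
    (s := Finset.univ.sigma fun i : Fin n => Finset.univ.erase i)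
    (f := fun q => v2 (dist (x q.1) (x q.2)))
    (fun q _ h => (hv2 _ dist_nonneg).not_gt (h ▸ EReal.bot_lt_coe (-1)))
    (fun h => by
      rw [h, EReal.coe_mul_top_of_pos (by norm_num), EReal.top_add_coe] at hE
      exact EReal.coe_ne_top c hE.symm)
  rw [hsum, ← EReal.coe_mul, ← EReal.coe_add, EReal.coe_eq_coe_iff, Finset.sum_sigma] at hE
  exact ⟨fun i j => (v2 (dist (x i) (x j))).toReal,
    fun i j hj => hreal ⟨i, j⟩ (Finset.mem_sigma.mpr ⟨Finset.mem_univ i, hj⟩), hE⟩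

lemma eq_of_sum_sum_le {ι κ : Type*} {s : Finset ι} {t : ι → Finset κ} {f g : ι → κ → ℝ}
    (hfg : ∀ i ∈ s, ∀ j ∈ t i, f i j ≤ g i j)
    (h : ∑ i ∈ s, ∑ j ∈ t i, g i j ≤ ∑ i ∈ s, ∑ j ∈ t i, f i j) :
    ∀ i ∈ s, ∀ j ∈ t i, f i j = g i j := by
  intro i hi j hj
  rw [Finset.sum_sigma', Finset.sum_sigma'] at h
  have hle : ∀ q ∈ s.sigma t, f q.1 q.2 ≤ g q.1 q.2 := fun q hq =>
    hfg q.1 (Finset.mem_sigma.mp hq).1 q.2 (Finset.mem_sigma.mp hq).2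
  exact (Finset.sum_eq_sum_iff_of_le hle).mp (le_antisymm (Finset.sum_le_sum hle) h) ⟨i, j⟩
    (Finset.mem_sigma.mpr ⟨hi, hj⟩)

lemma sum_sum_erase_ite_adj {ι : Type*} [Fintype ι] [DecidableEq ι] (G : SimpleGraph ι)
    [DecidableRel G.Adj] :
    ∑ i, ∑ j ∈ Finset.univ.erase i, (if G.Adj i j then (1 : ℝ) else 0) =
      2 * G.edgeFinset.card := by
  have hdeg (i : ι) : ∑ j ∈ Finset.univ.erase i, (if G.Adj i j then (1 : ℝ) else 0) =
      G.degree i := by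
    rw [Finset.sum_erase (a := i) _ (if_neg G.irrefl), Finset.sum_boole,
      ← G.card_neighborFinset_eq_degree, G.neighborFinset_eq_filter]
  simp only [hdeg]
  exact_mod_cast G.sum_degrees_eq_twice_card_edges

lemma neg_ite_adj_le (hv2 : ∀ r, 0 ≤ r → -1 ≤ v2 r) (hv2_tail : ∀ r, r0 < r → 0 ≤ v2 r)
    {i j : Fin n} (hij : i ≠ j) :
    ((-(if (bondGraph r0 x).Adj i j then 1 else 0) : ℝ) : EReal) ≤ v2 (dist (x i) (x j)) := by
  split_ifs with h
  · simpa using hv2 _ dist_nonneg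
  · simpa using hv2_tail _ (not_le.mp fun hd => h ⟨hij, hd⟩)

lemma sub_ne_zero_of_mem_offDiag (hx : Function.Injective x) {i : Fin n} {p : Fin n × Fin n}
    (hp : p ∈ ((bondGraph r0 x).neighborFinset i).offDiag) :
    x p.1 - x i ≠ 0 ∧ x p.2 - x i ≠ 0 := by
  simp only [Finset.mem_offDiag, SimpleGraph.mem_neighborFinset] at hp
  exact ⟨sub_ne_zero.mpr (hx.ne hp.1.ne'), sub_ne_zero.mpr (hx.ne hp.2.1.ne')⟩

lemma bendingCost_bondGraph (hx : Function.Injective x) :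
    bendingCost (bondGraph r0 x) (toComplex ∘ x) =
      1 / 2 * ∑ i, ∑ p ∈ ((bondGraph r0 x).neighborFinset i).offDiag,
        angleCost (cwAngle (x p.1 - x i) (x p.2 - x i)) := by
  rw [bendingCost]
  refine congrArg (1 / 2 * ·) (Finset.sum_congr rfl fun i _ => Finset.sum_congr rfl fun p hp => ?_)
  obtain ⟨hj, hk⟩ := sub_ne_zero_of_mem_offDiag hx hp
  rw [angleCost_cwAngle hj hk, map_sub, map_sub, EuclideanGeometry.angle, vsub_eq_sub,
    vsub_eq_sub, Function.comp_apply, Function.comp_apply, Function.comp_apply]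

lemma potentials_tight_of_energy_eq (hv2 : ∀ r, 0 ≤ r → -1 ≤ v2 r)
    (hv2_tail : ∀ r, r0 < r → 0 ≤ v2 r)
    (hv3 : ∀ θ ∈ Set.Icc 0 (2 * π), angleCost θ ≤ v3 θ) (hx : Function.Injective x)
    (hE : energy r0 v2 v3 x = ((-2 * (n : ℝ) + (⌈2 * Real.sqrt n⌉ : ℤ) : ℝ) : EReal)) :
    (∀ i j, (bondGraph r0 x).Adj i j → v2 (dist (x i) (x j)) = -1) ∧
      (∀ i j k, (bondGraph r0 x).Adj i j → (bondGraph r0 x).Adj i k → j ≠ k →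
        v3 (cwAngle (x j - x i) (x k - x i)) = angleCost (cwAngle (x j - x i) (x k - x i))) ∧
      2 * (n : ℝ) + bendingCost (bondGraph r0 x) (toComplex ∘ x) =
        (bondGraph r0 x).edgeFinset.card + ⌈2 * √(n : ℝ)⌉ := by
  obtain ⟨w, hw, hsum⟩ := exists_pairEnergy_of_energy_eq hv2 hE
  have hpair : ∀ i ∈ Finset.univ, ∀ j ∈ Finset.univ.erase i,
      -(if (bondGraph r0 x).Adj i j then 1 else 0) ≤ w i j := fun i _ j hj =>
    EReal.coe_le_coe_iff.mp <|
      hw i j hj ▸ neg_ite_adj_le hv2 hv2_tail (Finset.ne_of_mem_erase hj).symm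
  have htriple : ∀ i ∈ Finset.univ, ∀ p ∈ ((bondGraph r0 x).neighborFinset i).offDiag,
      angleCost (cwAngle (x p.1 - x i) (x p.2 - x i)) ≤
        v3 (cwAngle (x p.1 - x i) (x p.2 - x i)) := fun i _ p hp =>
    have hne := sub_ne_zero_of_mem_offDiag hx hp
    hv3 _ (cwAngle_mem_Icc hne.1 hne.2)
  have hpairs := Finset.sum_le_sum fun i hi => Finset.sum_le_sum (hpair i hi)
  have htriples := Finset.sum_le_sum fun i hi => Finset.sum_le_sum (htriple i hi)
  have hbound := card_edgeFinset_add_ceil_le_bendingCost (bondGraph r0 x)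
    (toComplex.injective.comp hx)
  have hbonds : ∑ i, ∑ j ∈ Finset.univ.erase i,
      -(if (bondGraph r0 x).Adj i j then (1 : ℝ) else 0) =
        -(2 * (bondGraph r0 x).edgeFinset.card) := by
    rw [← sum_sum_erase_ite_adj]
    simp only [Finset.sum_neg_distrib]
  rw [bendingCost_bondGraph hx, Fintype.card_fin] at hbound
  refine ⟨fun i j hij => ?_, fun i j k hij hik hjk => ?_, ?_⟩
  · have hj : j ∈ Finset.univ.erase i := Finset.mem_erase.mpr ⟨hij.ne', Finset.mem_univ j⟩
    rw [hw i j hj, ← eq_of_sum_sum_le hpair (by linarith) i (Finset.mem_univ i) j hj, if_pos hij]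
    rfl
  · refine (eq_of_sum_sum_le htriple (by linarith) i (Finset.mem_univ i) (j, k) ?_).symm
    simp only [Finset.mem_offDiag, SimpleGraph.mem_neighborFinset]
    exact ⟨hij, hik, hjk⟩
  · rw [bendingCost_bondGraph hx]
    linarith

end Energy

section Potentials

variable {ε : ℝ} {v3 : ℝ → ℝ}

lemma V3Hyp.eq_zero_of_mem (h : V3Hyp ε v3) {θ : ℝ}
    (hθ : θ ∈ ({π / 2, π, 3 * π / 2} : Set ℝ)) : v3 θ = 0 := by
  rcases hθ with rfl | rfl | rfl
  exacts [h.zero_pi_half, h.zero_pi, h.zero_three_pi_half]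

lemma V3Hyp.angleCost_lt_of_mem (h : V3Hyp ε v3) (hε : ε < π / 10) {θ : ℝ}
    (hθ : θ ∈ Set.Icc (π - ε) (π + ε)) (hne : θ ≠ π) : angleCost θ < v3 θ := by
  have habs : |θ - π| ≤ ε := abs_sub_le_iff.mpr ⟨by linarith [hθ.2], by linarith [hθ.1]⟩
  have hpos : 0 < |θ - π| := abs_pos.mpr (sub_ne_zero.mpr hne)
  rw [angleCost, if_pos (habs.trans hε.le)]
  refine lt_of_lt_of_le (mul_lt_mul_of_pos_right ?_ hpos) (h.slope θ hθ)
  rw [← div_eq_mul_inv, div_lt_div_iff₀ Real.pi_pos (by linarith [Real.pi_pos])]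
  linarith [Real.pi_pos]

lemma V3Hyp.two_lt (h : V3Hyp ε v3) (hε₀ : 0 < ε) (hε₁ : ε < 1) {θ : ℝ}
    (hθ : θ ∈ Set.Icc 0 (2 * π))
    (hfar : θ ∉ Set.Icc (π / 2 - ε) (π / 2 + ε) ∪ Set.Icc (π - ε) (π + ε) ∪
      Set.Icc (3 * π / 2 - ε) (3 * π / 2 + ε)) : 2 < v3 θ := by
  refine lt_trans ?_ (h.large θ hθ.1 hθ.2 hfar)
  have hfactor : 4 ≤ 4 / (1 - ε) ^ 2 :=
    le_div_self (by norm_num) (by nlinarith) (by nlinarith)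
  have hsqrt : 1 ≤ (√2 + 1 / 2) ^ 2 := by
    nlinarith [Real.sqrt_nonneg 2, Real.sq_sqrt (zero_le_two (α := ℝ))]
  nlinarith

lemma V3Hyp.angleCost_lt (h : V3Hyp ε v3) (hε₀ : 0 < ε) (hε : ε < π / 10) {θ : ℝ}
    (hθ : θ ∈ Set.Icc 0 (2 * π)) (hne : θ ∉ ({π / 2, π, 3 * π / 2} : Set ℝ)) :
    angleCost θ < v3 θ := by
  by_cases hwindow : θ ∈ Set.Icc (π / 2 - ε) (π / 2 + ε) ∪ Set.Icc (π - ε) (π + ε) ∪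
      Set.Icc (3 * π / 2 - ε) (3 * π / 2 + ε)
  · rcases hwindow with (hright | hstraight) | hright
    · rw [angleCost_eq_zero_of_almost_right]
      · exact h.pos θ hθ.1 hθ.2 hne
      · rw [abs_of_nonpos (a := θ - π) (by linarith [hright.2, Real.pi_pos]), abs_le]
        constructor <;> linarith [hright.1, hright.2]
    · exact h.angleCost_lt_of_mem hε hstraight fun hπ => hne (Or.inr (Or.inl hπ))
    · rw [angleCost_eq_zero_of_almost_right]
      · exact h.pos θ hθ.1 hθ.2 hne
      · rw [abs_of_nonneg (a := θ - π) (by linarith [hright.1, Real.pi_pos]), abs_le]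
        constructor <;> linarith [hright.1, hright.2]
  · exact (angleCost_le_two θ).trans_lt
      (h.two_lt hε₀ (by linarith [Real.pi_lt_four]) hθ hwindow)

lemma V3Hyp.angleCost_le (h : V3Hyp ε v3) (hε₀ : 0 < ε) (hε : ε < π / 10) {θ : ℝ}
    (hθ : θ ∈ Set.Icc 0 (2 * π)) : angleCost θ ≤ v3 θ := by
  by_cases hmem : θ ∈ ({π / 2, π, 3 * π / 2} : Set ℝ)
  · rw [angleCost_eq_zero_of_mem hmem, h.eq_zero_of_mem hmem]
  · exact (h.angleCost_lt hε₀ hε hθ hmem).le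

end Potentials

lemma exists_isometryEquiv_mem_latticeZ2 {ι : Type*} {x : ι → Pt} {p : Pt} {u : ℂ} (hu : ‖u‖ = 1)
    (h : ∀ j, ∃ g : GaussianInt, toComplex (x j) - toComplex p = g * u) :
    ∃ R : Pt ≃ᵢ Pt, ∀ j, R (x j) ∈ latticeZ2 := by
  let c : Circle := ⟨u, mem_sphere_zero_iff_norm.mpr hu⟩
  let R : Pt ≃ᵢ Pt := toComplex.toIsometryEquiv.trans <|
    (IsometryEquiv.subRight (toComplex p)).trans <|
      (rotation c⁻¹).toIsometryEquiv.trans toComplex.symm.toIsometryEquiv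
  refine ⟨R, fun j => ?_⟩
  obtain ⟨g, hg⟩ := h j
  have hR : toComplex (R (x j)) = g := by
    calc toComplex (R (x j)) = rotation c⁻¹ (toComplex (x j) - toComplex p) :=
          toComplex.apply_symm_apply _
      _ = (u⁻¹ * u) * g := by
        rw [rotation_apply, hg, Circle.coe_inv]
        ring
      _ = g := by rw [inv_mul_cancel₀ c.coe_ne_zero, one_mul]
  rw [toComplex_apply, GaussianInt.toComplex_def] at hR
  exact ⟨g.re, g.im, by simpa using congrArg Complex.re hR, by simpa using congrArg Complex.im hR⟩

theorem crystallization_equality_case_general {r0 : ℝ} {v2 : ℝ → EReal} {v3 : ℝ → ℝ}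
    (hv2 : ∀ r, 0 ≤ r → -1 ≤ v2 r) (hv2_eq : ∀ r, 0 ≤ r → v2 r = -1 → r = 1)
    (hv2_tail : ∀ r, r0 < r → 0 ≤ v2 r) (hv3 : ∀ θ ∈ Set.Icc 0 (2 * π), angleCost θ ≤ v3 θ)
    (hv3_eq : ∀ θ ∈ Set.Icc 0 (2 * π), v3 θ = angleCost θ →
      θ ∈ ({π / 2, π, 3 * π / 2} : Set ℝ))
    {n : ℕ} {x : Fin n → Pt} (hx : Function.Injective x)
    (hE : energy r0 v2 v3 x = ((-2 * (n : ℝ) + (⌈2 * Real.sqrt n⌉ : ℤ) : ℝ) : EReal)) :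
    ∃ R : Pt ≃ᵢ Pt, ∀ i, R (x i) ∈ latticeZ2 := by
  obtain ⟨hbond, hangle, hcard⟩ := potentials_tight_of_energy_eq hv2 hv2_tail hv3 hx hE
  have hright : RightAngled (bondGraph r0 x) (toComplex ∘ x) := fun i j k hij hik hjk => by
    have hj := sub_ne_zero.mpr (hx.ne hij.ne')
    have hk := sub_ne_zero.mpr (hx.ne hik.ne')
    have := angle_eq_of_cwAngle_mem hj hk
      (hv3_eq _ (cwAngle_mem_Icc hj hk) (hangle i j k hij hik hjk))
    rwa [map_sub, map_sub] at this
  have hunit (i j : Fin n) (hij : (bondGraph r0 x).Adj i j) :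
      ‖toComplex (x j) - toComplex (x i)‖ = 1 := by
    rw [← dist_eq_norm, toComplex.dist_map, dist_comm]
    exact hv2_eq _ dist_nonneg (hbond i j hij)
  have hconn : (bondGraph r0 x).Preconnected := by
    refine hright.preconnected (toComplex.injective.comp hx) ?_
    rw [hright.bendingCost_eq_zero, add_zero] at hcard
    rw [Fintype.card_fin]
    exact_mod_cast hcard.le
  rcases isEmpty_or_nonempty (Fin n) with _ | ⟨⟨i⟩⟩
  · exact ⟨IsometryEquiv.refl Pt, isEmptyElim⟩
  obtain ⟨u, hu, hcoord⟩ := hright.exists_gaussianInt_coordinates hunit hconn i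
  exact exists_isometryEquiv_mem_latticeZ2 hu hcoord

/-- **Crystallization (equality case).** If a configuration attains the minimal energy
`−2n + ⌈2√n⌉`, then after a rigid motion it is contained in `ℤ²`. -/
theorem crystallization_equality_case :
    ∃ ε₀ : ℝ, 0 < ε₀ ∧ ε₀ < π / 6 ∧
      ∀ ε : ℝ, 0 < ε → ε < ε₀ →
      ∀ r0 : ℝ, 1 < r0 → r0 < Real.sqrt 2 →
      ∀ (v2 : ℝ → EReal) (v3 : ℝ → ℝ), V2Hyp ε r0 v2 → V3Hyp ε v3 →
      ∀ n : ℕ, 1 ≤ n → ∀ x : Fin n → Pt, Function.Injective x →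
      energy r0 v2 v3 x = ((-2 * (n : ℝ) + (⌈2 * Real.sqrt n⌉ : ℤ) : ℝ) : EReal) →
      ∃ R : Pt ≃ᵢ Pt, ∀ i : Fin n, R (x i) ∈ latticeZ2 := by
  refine ⟨π / 10, by positivity, by linarith [Real.pi_pos], ?_⟩
  intro ε hε₀ hε r0 _ _ v2 v3 h2 h3 n _ x hx hE
  refine crystallization_equality_case_general h2.ge_neg_one (fun r hr hmin => ?_)
    (fun r hr => (h2.eq_zero r hr.le).ge) (fun θ hθ => h3.angleCost_le hε₀ hε hθ)
    (fun θ hθ heq => ?_) hx hE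
  · exact by_contra fun hne => (h2.gt_neg_one r hr hne).ne' hmin
  · exact by_contra fun hmem => (h3.angleCost_lt hε₀ hε hθ hmem).ne' heq

end
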